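/- arXiv:2511.21455 — 3 statements merged into one kernel-verified Lean document; each statement's English description precedes it below -/
import Mathlib

section
/- Let g be entire, not identically zero, and let gₙ → g uniformly on compact subsets of ℂ. Then the zero counting measures of gₙ converge vaguely to the zero counting measure of g (counting multiplicities). Equivalently, the map sending an entire function to its zero multiset, viewed as a locally finite atomic measure, is continuous at every entire function not identically zero. -/
open MeasureTheory Filter

/-- The multiplicity of `z` as a zero of `g`: the smallest `n` with `g⁽ⁿ⁾(z) ≠ 0`
(equal to `0` when `g z ≠ 0`). -/
noncomputable def zeroMult (g : ℂ → ℂ) (z : ℂ) : ℕ :=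
  sInf {n : ℕ | iteratedDeriv n g z ≠ 0}

/-- The zero counting measure of an entire function, counting multiplicities. -/
noncomputable def zeroMeasure (g : ℂ → ℂ) : Measure ℂ :=
  Measure.sum (fun z : ℂ => (zeroMult g z : ENNReal) • Measure.dirac z)

/-!
The zeros of `g` are isolated, so finitely many small disjoint discs around them cover all the
zeros of `g` in the support of a test function. On such a disc, the argument principle expresses
`2πi` times the number of zeros as the integral of the logarithmic derivative over the boundary
circle; these integrals converge, and integers that converge are eventually constant. Since `g` has
no zero in the disc other than its centre, the zeros of `gₙ` in the disc accumulate only there, so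
each disc contributes in the limit the multiplicity times the value of the test function at the
centre. Off the discs, `g` is bounded away from `0` on the support, and `gₙ` eventually has no zero.
-/

open Metric Topology

section Topology

variable {X : Type*} [TopologicalSpace X] {K : Set X}

lemma finite_sep_of_eventually_nhdsNE_not (hK : IsCompact K) {p : X → Prop}
    (hp : ∀ x ∈ K, ∀ᶠ y in 𝓝[≠] x, ¬ p y) : {x ∈ K | p x}.Finite := by
  by_contra hinf
  obtain ⟨x, hxK, hx⟩ :=
    Set.Infinite.exists_accPt_of_subset_isCompact hinf hK (Set.sep_subset K p)
  exact (accPt_iff_frequently_nhdsNE.mp hx).mono (fun _ hy => hy.2) (hp x hxK)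

lemma eventually_forall_ne_zero_of_tendstoLocallyUniformlyOn {ι E : Type*}
    [NormedAddCommGroup E] {F : ι → X → E} {f : X → E} {l : Filter ι}
    (hF : TendstoLocallyUniformlyOn F f l K) (hK : IsCompact K) (hf : ContinuousOn f K)
    (h0 : ∀ x ∈ K, f x ≠ 0) : ∀ᶠ i in l, ∀ x ∈ K, F i x ≠ 0 := by
  obtain ⟨ε, hε, hfε⟩ := hK.exists_forall_le' hf.norm fun x hx => norm_pos_iff.mpr (h0 x hx)
  have hunif := (tendstoLocallyUniformlyOn_iff_tendstoUniformlyOn_of_compact hK).mp hF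
  filter_upwards [Metric.tendstoUniformlyOn_iff.mp hunif ε hε] with i hi x hx hFx
  have hlt := hi x hx
  rw [hFx, dist_zero_right] at hlt
  exact (hfε x hx).not_gt hlt

lemma exists_pairwiseDisjoint_closedBall_subset {X : Type*} [MetricSpace X] {Z : Set X}
    {N : X → Set X} (hZ : Z.Finite) (hN : ∀ z ∈ Z, N z ∈ 𝓝 z) :
    ∃ r : X → ℝ, (∀ z ∈ Z, 0 < r z) ∧ (∀ z ∈ Z, closedBall z (r z) ⊆ N z) ∧
      Z.PairwiseDisjoint fun z => closedBall z (r z) := by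
  obtain ⟨V, hV, hdisj⟩ := hZ.t2_separation
  have hex : ∀ z, ∃ r : ℝ, z ∈ Z → 0 < r ∧ closedBall z r ⊆ N z ∩ V z := fun z => by
    by_cases hz : z ∈ Z
    · obtain ⟨r, hr, hsub⟩ := nhds_basis_closedBall.mem_iff.mp
        (inter_mem (hN z hz) ((hV z).2.mem_nhds (hV z).1))
      exact ⟨r, fun _ => ⟨hr, hsub⟩⟩
    · exact ⟨0, fun hz' => absurd hz' hz⟩
  choose r hr using hex
  exact ⟨r, fun z hz => (hr z hz).1, fun z hz => (hr z hz).2.trans Set.inter_subset_left,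
    fun z hz w hw hzw => (hdisj hz hw hzw).mono ((hr z hz).2.trans Set.inter_subset_right)
      ((hr w hw).2.trans Set.inter_subset_right)⟩

end Topology

section Measure

variable {X E : Type*} [MeasurableSpace X] [NormedAddCommGroup E] [NormedSpace ℝ E] {φ : X → E}

lemma integral_eq_sum_setIntegral {ι : Type*} {μ : Measure X} {S : Finset ι} {B : ι → Set X}
    (hB : ∀ c ∈ S, MeasurableSet (B c)) (hdisj : (S : Set ι).PairwiseDisjoint B)
    (hint : ∀ c ∈ S, IntegrableOn φ (B c) μ) (hnull : ∀ᵐ x ∂μ, x ∉ ⋃ c ∈ S, B c → φ x = 0) :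
    ∫ x, φ x ∂μ = ∑ c ∈ S, ∫ x in B c, φ x ∂μ := by
  rw [← setIntegral_eq_integral_of_ae_compl_eq_zero hnull,
    integral_biUnion_finset S hB hdisj hint]

lemma tendsto_setIntegral_of_concentrates [TopologicalSpace X] [CompleteSpace E] {ι : Type*}
    {l : Filter ι} {μ : ι → Measure X} {s : Set X} {c : X} {m : ℝ} (hφ : ContinuousAt φ c)
    (hint : ∀ᶠ i in l, IntegrableOn φ s (μ i)) (hfin : ∀ᶠ i in l, μ i s ≠ ⊤)
    (hmass : Tendsto (fun i => (μ i).real s) l (𝓝 m))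
    (hconc : ∀ V ∈ 𝓝 c, ∀ᶠ i in l, μ i (s \ V) = 0) :
    Tendsto (fun i => ∫ x in s, φ x ∂(μ i)) l (𝓝 (m • φ c)) := by
  have hdiff : Tendsto (fun i => ∫ x in s, (φ x - φ c) ∂(μ i)) l (𝓝 0) := by
    rw [Metric.tendsto_nhds]
    intro ε hε
    have hm : 0 < |m| + 1 := by positivity
    have hV : {x | ‖φ x - φ c‖ ≤ ε / (|m| + 1)} ∈ 𝓝 c := by
      filter_upwards [Metric.tendsto_nhds.mp hφ _ (div_pos hε hm)] with x hx
      exact dist_eq_norm (φ x) (φ c) ▸ hx.le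
    filter_upwards [hfin, hconc _ hV,
      hmass.eventually_lt_const ((le_abs_self m).trans_lt (lt_add_one |m|))] with i hi hnull hlt
    have hclose : ∀ᵐ x ∂μ i, x ∈ s → ‖φ x - φ c‖ ≤ ε / (|m| + 1) :=
      measure_mono_null (fun x hx => by simpa using hx) hnull
    rw [dist_zero_right]
    calc ‖∫ x in s, (φ x - φ c) ∂(μ i)‖
        ≤ ε / (|m| + 1) * (μ i).real s :=
          norm_setIntegral_le_of_norm_le_const_ae' hi.lt_top hclose
      _ < ε / (|m| + 1) * (|m| + 1) := by gcongr
      _ = ε := div_mul_cancel₀ ε hm.ne'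
  have hsum := hdiff.add (hmass.smul_const (φ c))
  rw [zero_add] at hsum
  refine hsum.congr' ?_
  filter_upwards [hint, hfin] with i hi hi'
  rw [integral_sub hi (integrableOn_const hi'), setIntegral_const, sub_add_cancel]

end Measure

section AnalyticOrder

variable {𝕜 E : Type*} [NontriviallyNormedField 𝕜] [NormedAddCommGroup E] [NormedSpace 𝕜 E]
  {f : 𝕜 → E} {z : 𝕜}

lemma eventually_nhdsNE_ne_zero_of_analyticOrderAt_ne_top (hf : AnalyticAt 𝕜 f z)
    (hord : analyticOrderAt f z ≠ ⊤) : ∀ᶠ w in 𝓝[≠] z, f w ≠ 0 :=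
  hf.eventually_eq_zero_or_eventually_ne_zero.resolve_left (mt analyticOrderAt_eq_top.mpr hord)

lemma analyticAt_dslope {a : 𝕜} (ha : AnalyticAt 𝕜 f a) (hz : AnalyticAt 𝕜 f z) :
    AnalyticAt 𝕜 (dslope f a) z := by
  rcases eq_or_ne z a with rfl | hza
  · obtain ⟨p, hp⟩ := ha
    exact hp.has_fpower_series_dslope_fslope.analyticAt
  · refine AnalyticAt.congr ?_ (dslope_eventuallyEq_slope_of_ne f hza).symm
    exact ((analyticAt_id.sub analyticAt_const).inv (sub_ne_zero.mpr hza)).smul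
      (hz.sub analyticAt_const)

lemma exists_analyticOnNhd_eq_sub_mul {f : 𝕜 → 𝕜} {a : 𝕜} {s : Set 𝕜} (hf : AnalyticOnNhd 𝕜 f s)
    (ha : a ∈ s) (hfa : f a = 0) : ∃ h, AnalyticOnNhd 𝕜 h s ∧ f = (· - a) * h := by
  refine ⟨dslope f a, fun z hz => analyticAt_dslope (hf a ha) (hf z hz), ?_⟩
  ext z
  exact (sub_smul_dslope_of_zero hfa z).symm

lemma analyticOrderAt_ne_top_of_isPreconnected_of_ne_zero {s : Set 𝕜} {w : 𝕜}
    (hf : AnalyticOnNhd 𝕜 f s) (hs : IsPreconnected s) (hw : w ∈ s) (hfw : f w ≠ 0) :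
    ∀ z ∈ s, analyticOrderAt f z ≠ ⊤ := fun _ hz =>
  hf.analyticOrderAt_ne_top_of_isPreconnected hs hw hz <|
    (hf w hw).analyticOrderAt_eq_zero.mpr hfw ▸ ENat.zero_ne_top

lemma analyticOrderAt_ne_top_of_forall_mem_sphere_ne_zero {f : ℂ → ℂ} {c : ℂ} {r : ℝ}
    (hr : 0 ≤ r) (hf : AnalyticOnNhd ℂ f (closedBall c r)) (h0 : ∀ z ∈ sphere c r, f z ≠ 0) :
    ∀ z ∈ closedBall c r, analyticOrderAt f z ≠ ⊤ := by
  obtain ⟨w, hw⟩ : (sphere c r).Nonempty := NormedSpace.sphere_nonempty.mpr hr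
  exact analyticOrderAt_ne_top_of_isPreconnected_of_ne_zero hf
    (convex_closedBall c r).isPreconnected (sphere_subset_closedBall hw) (h0 w hw)

end AnalyticOrder

section ZeroMeasure

variable {f h : ℂ → ℂ} {z : ℂ} {s : Set ℂ}

lemma zeroMult_eq_zero (hz : f z ≠ 0) : zeroMult f z = 0 :=
  Nat.sInf_eq_zero.mpr (Or.inl (by simpa using hz))

lemma zeroMult_eq_analyticOrderNatAt (hf : AnalyticAt ℂ f z) :
    zeroMult f z = analyticOrderNatAt f z := by
  by_cases hord : analyticOrderAt f z = ⊤
  · have hall : ∀ n, iteratedDeriv n f z = 0 := fun n =>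
      ((natCast_le_analyticOrderAt_iff_iteratedDeriv_eq_zero hf).mp (hord ▸ le_top)) n
        (Nat.lt_succ_self n)
    simp [zeroMult, hall, analyticOrderNatAt, hord]
  · obtain ⟨hlow, hne⟩ := (analyticOrderAt_eq_nat_iff_iteratedDeriv_eq_zero hf).mp
      (Nat.cast_analyticOrderNatAt hord).symm
    exact le_antisymm (Nat.sInf_le hne)
      (le_csInf ⟨_, hne⟩ fun n hn => not_lt.mp fun hlt => hn (hlow n hlt))

lemma eventually_nhdsNE_zeroMult_eq_zero (hf : AnalyticAt ℂ f z) :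
    ∀ᶠ w in 𝓝[≠] z, zeroMult f w = 0 := by
  rcases hf.eventually_eq_zero_or_eventually_ne_zero with hzero | hne
  · filter_upwards [nhdsWithin_le_nhds hzero.eventually_nhds,
      nhdsWithin_le_nhds hf.eventually_analyticAt] with w hw hfw
    rw [zeroMult_eq_analyticOrderNatAt hfw, analyticOrderNatAt, analyticOrderAt_eq_top.mpr hw,
      ENat.toNat_top]
  · exact hne.mono fun _ => zeroMult_eq_zero

lemma zeroMult_mul (hf : AnalyticAt ℂ f z) (hh : AnalyticAt ℂ h z)
    (hf' : analyticOrderAt f z ≠ ⊤) (hh' : analyticOrderAt h z ≠ ⊤) :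
    zeroMult (f * h) z = zeroMult f z + zeroMult h z := by
  rw [zeroMult_eq_analyticOrderNatAt (hf.mul hh), zeroMult_eq_analyticOrderNatAt hf,
    zeroMult_eq_analyticOrderNatAt hh, analyticOrderNatAt_mul hf hh hf' hh']

lemma zeroMult_sub_const (a : ℂ) : zeroMult (· - a) z = if z = a then 1 else 0 := by
  rw [zeroMult_eq_analyticOrderNatAt (by fun_prop)]
  split_ifs with hz
  · simp [analyticOrderNatAt, hz]
  · simp [analyticOrderNatAt, hz]

lemma zeroMeasure_apply (hs : MeasurableSet s) :
    zeroMeasure f s = ∑' z, s.indicator (fun z => (zeroMult f z : ENNReal)) z := by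
  rw [zeroMeasure, Measure.sum_apply _ hs]
  refine tsum_congr fun z => ?_
  by_cases hz : z ∈ s <;> simp [hz, Measure.dirac_apply' _ hs]

lemma zeroMeasure_eq_zero_of_forall_ne_zero (hs : MeasurableSet s) (h0 : ∀ z ∈ s, f z ≠ 0) :
    zeroMeasure f s = 0 := by
  rw [zeroMeasure_apply hs, ENNReal.tsum_eq_zero]
  exact fun z => Set.indicator_apply_eq_zero.mpr fun hz => by simp [zeroMult_eq_zero (h0 z hz)]

lemma zeroMeasure_eq_zero_iff (hs : MeasurableSet s) (hf : AnalyticOnNhd ℂ f s)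
    (hord : ∀ z ∈ s, analyticOrderAt f z ≠ ⊤) : zeroMeasure f s = 0 ↔ ∀ z ∈ s, f z ≠ 0 := by
  refine ⟨fun hnull z hz hfz => ?_, zeroMeasure_eq_zero_of_forall_ne_zero hs⟩
  rw [zeroMeasure_apply hs, ENNReal.tsum_eq_zero] at hnull
  have hmult : zeroMult f z = 0 := by
    exact_mod_cast Set.indicator_apply_eq_zero.mp (hnull z) hz
  rw [zeroMult_eq_analyticOrderNatAt (hf z hz)] at hmult
  refine (hf z hz).analyticOrderAt_ne_zero.mpr hfz ?_
  rw [← Nat.cast_analyticOrderNatAt (hord z hz), hmult, Nat.cast_zero]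

lemma exists_natCast_eq_zeroMeasure (hs : IsCompact s) (hf : AnalyticOnNhd ℂ f s) :
    ∃ N : ℕ, zeroMeasure f s = N := by
  have hfin : {z ∈ s | zeroMult f z ≠ 0}.Finite := finite_sep_of_eventually_nhdsNE_not hs
    fun z hz => (eventually_nhdsNE_zeroMult_eq_zero (hf z hz)).mono fun _ hw => not_not_intro hw
  have hsupp : ∀ z ∉ hfin.toFinset, s.indicator (fun z => (zeroMult f z : ENNReal)) z = 0 := by
    refine fun z hz => Set.indicator_apply_eq_zero.mpr fun hzs => ?_
    by_contra hmult
    exact hz (hfin.mem_toFinset.mpr ⟨hzs, mod_cast hmult⟩)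
  refine ⟨∑ z ∈ hfin.toFinset, zeroMult f z, ?_⟩
  rw [zeroMeasure_apply hs.measurableSet, tsum_eq_sum hsupp, Nat.cast_sum]
  exact Finset.sum_congr rfl fun z hz => Set.indicator_of_mem (hfin.mem_toFinset.mp hz).1 _

lemma integrableOn_zeroMeasure {E : Type*} [NormedAddCommGroup E] {φ : ℂ → E} (hs : IsCompact s)
    (hf : AnalyticOnNhd ℂ f s) (hφ : ContinuousOn φ s) : IntegrableOn φ s (zeroMeasure f) := by
  obtain ⟨N, hN⟩ := exists_natCast_eq_zeroMeasure hs hf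
  exact hφ.integrableOn_of_subset_isCompact hs hs.measurableSet subset_rfl
    (hN ▸ ENNReal.natCast_ne_top N)

lemma integral_zeroMeasure_eq_sum_closedBall {E : Type*} [NormedAddCommGroup E] [NormedSpace ℝ E]
    {φ : ℂ → E} {Z : Finset ℂ} {r : ℂ → ℝ}
    (hdisj : (Z : Set ℂ).PairwiseDisjoint fun c => closedBall c (r c))
    (hf : ∀ c ∈ Z, AnalyticOnNhd ℂ f (closedBall c (r c))) (hφ : Continuous φ)
    (hnull : zeroMeasure f (tsupport φ \ ⋃ c ∈ Z, ball c (r c)) = 0) :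
    ∫ z, φ z ∂(zeroMeasure f) = ∑ c ∈ Z, ∫ z in closedBall c (r c), φ z ∂(zeroMeasure f) := by
  refine integral_eq_sum_setIntegral (fun _ _ => measurableSet_closedBall) hdisj (fun c hc =>
    integrableOn_zeroMeasure (isCompact_closedBall c (r c)) (hf c hc) hφ.continuousOn)
    (measure_mono_null (fun z hz => ?_) hnull)
  obtain ⟨hzB, hφz⟩ := Classical.not_imp.mp hz
  exact ⟨subset_tsupport φ hφz,
    fun hzb => hzB (Set.iUnion₂_mono (fun _ _ => ball_subset_closedBall) hzb)⟩

lemma setIntegral_zeroMeasure_eq_smul {E : Type*} [NormedAddCommGroup E] [NormedSpace ℝ E]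
    [CompleteSpace E] {φ : ℂ → E} {c : ℂ} (hs : MeasurableSet s)
    (h0 : ∀ z ∈ s, z ≠ c → f z ≠ 0) :
    ∫ z in s, φ z ∂(zeroMeasure f) = (zeroMeasure f).real s • φ c := by
  have hnull : zeroMeasure f (s \ {c}) = 0 :=
    zeroMeasure_eq_zero_of_forall_ne_zero (hs.diff (measurableSet_singleton c))
      fun z hz => h0 z hz.1 hz.2
  have hae : ∀ᵐ z ∂(zeroMeasure f), z ∈ s → φ z = φ c := by
    refine measure_mono_null (fun z hz => ?_) hnull
    obtain ⟨hzs, hzφ⟩ := Classical.not_imp.mp hz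
    exact ⟨hzs, fun hzc => hzφ (congrArg φ hzc)⟩
  rw [setIntegral_congr_ae hs hae, setIntegral_const]

lemma zeroMeasure_mul_apply (hs : MeasurableSet s) (hf : AnalyticOnNhd ℂ f s)
    (hh : AnalyticOnNhd ℂ h s) (hf' : ∀ z ∈ s, analyticOrderAt f z ≠ ⊤)
    (hh' : ∀ z ∈ s, analyticOrderAt h z ≠ ⊤) :
    zeroMeasure (f * h) s = zeroMeasure f s + zeroMeasure h s := by
  rw [zeroMeasure_apply hs, zeroMeasure_apply hs, zeroMeasure_apply hs, ← ENNReal.tsum_add]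
  refine tsum_congr fun z => ?_
  by_cases hz : z ∈ s
  · simp [hz, zeroMult_mul (hf z hz) (hh z hz) (hf' z hz) (hh' z hz)]
  · simp [hz]

lemma zeroMeasure_sub_const (a : ℂ) : zeroMeasure (· - a) = Measure.dirac a := by
  ext s hs
  rw [zeroMeasure_apply hs, tsum_eq_single a]
  · by_cases ha : a ∈ s <;> simp [ha, zeroMult_sub_const, Measure.dirac_apply' _ hs]
  · intro z hz
    simp [zeroMult_sub_const, hz]

end ZeroMeasure

section ArgumentPrinciple

variable {f h : ℂ → ℂ} {a c : ℂ} {r : ℝ}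

lemma continuousOn_logDeriv {s : Set ℂ} (hf : AnalyticOnNhd ℂ f s) (h0 : ∀ z ∈ s, f z ≠ 0) :
    ContinuousOn (logDeriv f) s :=
  hf.deriv.continuousOn.div hf.continuousOn h0

lemma circleIntegral_logDeriv_mul (hr : 0 ≤ r) (hf : AnalyticOnNhd ℂ f (sphere c r))
    (hh : AnalyticOnNhd ℂ h (sphere c r)) (hf0 : ∀ z ∈ sphere c r, f z ≠ 0)
    (hh0 : ∀ z ∈ sphere c r, h z ≠ 0) :
    circleIntegral (logDeriv (f * h)) c r =
      circleIntegral (logDeriv f) c r + circleIntegral (logDeriv h) c r := by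
  rw [← circleIntegral.integral_add ((continuousOn_logDeriv hf hf0).circleIntegrable hr)
    ((continuousOn_logDeriv hh hh0).circleIntegrable hr)]
  exact circleIntegral.integral_congr hr fun z hz =>
    logDeriv_mul z (hf0 z hz) (hh0 z hz) (hf z hz).differentiableAt (hh z hz).differentiableAt

lemma circleIntegral_logDeriv_sub_const (ha : a ∈ ball c r) :
    circleIntegral (logDeriv (· - a)) c r = 2 * Real.pi * Complex.I := by
  rw [← circleIntegral.integral_sub_inv_of_mem_ball ha]
  congr 1
  ext z
  simp [logDeriv_apply]

lemma circleIntegral_logDeriv_eq_zero (hr : 0 ≤ r) (hf : AnalyticOnNhd ℂ f (closedBall c r))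
    (h0 : ∀ z ∈ closedBall c r, f z ≠ 0) : circleIntegral (logDeriv f) c r = 0 :=
  DiffContOnCl.circleIntegral_eq_zero hr <| DifferentiableOn.diffContOnCl fun z hz =>
    have hz := closure_ball_subset_closedBall hz
    ((hf z hz).deriv.div (hf z hz) (h0 z hz)).differentiableAt.differentiableWithinAt

theorem circleIntegral_logDeriv_eq_zeroMeasure (hr : 0 ≤ r)
    (hf : AnalyticOnNhd ℂ f (closedBall c r)) (h0 : ∀ z ∈ sphere c r, f z ≠ 0) :
    circleIntegral (logDeriv f) c r =
      2 * Real.pi * Complex.I * (zeroMeasure f).real (closedBall c r) := by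
  have hord := analyticOrderAt_ne_top_of_forall_mem_sphere_ne_zero hr hf h0
  obtain ⟨N, hN⟩ := exists_natCast_eq_zeroMeasure (isCompact_closedBall c r) hf
  rw [measureReal_def, hN, ENNReal.toReal_natCast, Complex.ofReal_natCast]
  induction N generalizing f with
  | zero =>
    rw [Nat.cast_zero, zeroMeasure_eq_zero_iff measurableSet_closedBall hf hord] at hN
    rw [circleIntegral_logDeriv_eq_zero hr hf hN, Nat.cast_zero, mul_zero]
  | succ N ih =>
    obtain ⟨a, ha, hfa⟩ : ∃ a ∈ closedBall c r, f a = 0 := by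
      by_contra! hne
      rw [(zeroMeasure_eq_zero_iff measurableSet_closedBall hf hord).mpr hne] at hN
      exact Nat.succ_ne_zero N (by exact_mod_cast hN.symm)
    have ha' : a ∈ ball c r := mem_ball.mpr <| (mem_closedBall.mp ha).lt_of_ne
      fun hsphere => h0 a hsphere hfa
    obtain ⟨h, hh, rfl⟩ := exists_analyticOnNhd_eq_sub_mul hf ha hfa
    have hh0 : ∀ z ∈ sphere c r, h z ≠ 0 := fun z hz => right_ne_zero_of_mul (h0 z hz)
    have hl0 : ∀ z ∈ sphere c r, z - a ≠ 0 := fun z hz => left_ne_zero_of_mul (h0 z hz)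
    have hl : AnalyticOnNhd ℂ (· - a) (closedBall c r) := fun z _ => by fun_prop
    have hlord := analyticOrderAt_ne_top_of_forall_mem_sphere_ne_zero hr hl hl0
    have hhord := analyticOrderAt_ne_top_of_forall_mem_sphere_ne_zero hr hh hh0
    have hcount : zeroMeasure h (closedBall c r) = N := by
      rw [zeroMeasure_mul_apply measurableSet_closedBall hl hh hlord hhord, zeroMeasure_sub_const,
        Measure.dirac_apply_of_mem ha, Nat.cast_add_one, add_comm] at hN
      exact (ENNReal.add_left_inj ENNReal.one_ne_top).mp hN
    rw [circleIntegral_logDeriv_mul hr (hl.mono sphere_subset_closedBall)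
      (hh.mono sphere_subset_closedBall) hl0 hh0, circleIntegral_logDeriv_sub_const ha',
      ih hh hh0 hhord hcount, Nat.cast_add_one]
    ring

theorem zeroMeasure_closedBall_eq_of_norm_logDeriv_sub_le {C : ℝ} (hr : 0 ≤ r)
    (hf : AnalyticOnNhd ℂ f (closedBall c r)) (hh : AnalyticOnNhd ℂ h (closedBall c r))
    (hf0 : ∀ z ∈ sphere c r, f z ≠ 0) (hh0 : ∀ z ∈ sphere c r, h z ≠ 0)
    (hC : ∀ z ∈ sphere c r, ‖logDeriv f z - logDeriv h z‖ ≤ C) (hrC : r * C < 1) :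
    zeroMeasure f (closedBall c r) = zeroMeasure h (closedBall c r) := by
  obtain ⟨M, hM⟩ := exists_natCast_eq_zeroMeasure (isCompact_closedBall c r) hf
  obtain ⟨N, hN⟩ := exists_natCast_eq_zeroMeasure (isCompact_closedBall c r) hh
  have hcount : circleIntegral (fun z => logDeriv f z - logDeriv h z) c r =
      2 * Real.pi * Complex.I * ((M - N : ℤ) : ℂ) := by
    rw [circleIntegral.integral_sub
      ((continuousOn_logDeriv (hf.mono sphere_subset_closedBall) hf0).circleIntegrable hr)
      ((continuousOn_logDeriv (hh.mono sphere_subset_closedBall) hh0).circleIntegrable hr),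
      circleIntegral_logDeriv_eq_zeroMeasure hr hf hf0,
      circleIntegral_logDeriv_eq_zeroMeasure hr hh hh0, measureReal_def, measureReal_def, hM, hN]
    push_cast [ENNReal.toReal_natCast]
    ring
  have hbound := circleIntegral.norm_integral_le_of_norm_le_const hr hC
  rw [hcount, norm_mul, Complex.norm_intCast, norm_mul, norm_mul, Complex.norm_I, Complex.norm_real,
    Complex.norm_ofNat, Real.norm_of_nonneg Real.pi_pos.le, mul_one, mul_assoc _ r C] at hbound
  have hlt : |(M - N : ℤ)| < 1 := by
    exact_mod_cast (le_of_mul_le_mul_left hbound Real.two_pi_pos).trans_lt hrC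
  rw [hM, hN, Nat.cast_inj]
  exact_mod_cast sub_eq_zero.mp (Int.abs_lt_one_iff.mp hlt)

end ArgumentPrinciple

section Hurwitz

variable {ι : Type*} {l : Filter ι} {F : ι → ℂ → ℂ} {g : ℂ → ℂ} {U : Set ℂ} {c : ℂ} {r : ℝ}

theorem eventually_zeroMeasure_closedBall_eq (hU : IsOpen U) (hr : 0 ≤ r)
    (hsub : closedBall c r ⊆ U) (hF : ∀ᶠ i in l, DifferentiableOn ℂ (F i) U)
    (hg : DifferentiableOn ℂ g U) (hconv : TendstoLocallyUniformlyOn F g l U)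
    (h0 : ∀ z ∈ sphere c r, g z ≠ 0) :
    ∀ᶠ i in l, zeroMeasure (F i) (closedBall c r) = zeroMeasure g (closedBall c r) := by
  have hS : sphere c r ⊆ U := sphere_subset_closedBall.trans hsub
  have hgS := (hg.analyticOnNhd hU).mono hS
  have hlog : TendstoLocallyUniformlyOn (fun i => logDeriv (F i)) (logDeriv g) l (sphere c r) :=
    ((hconv.deriv hF hU).mono hS).div₀ (hconv.mono hS) hgS.deriv.continuousOn hgS.continuousOn h0
  have hunif := (tendstoLocallyUniformlyOn_iff_tendstoUniformlyOn_of_compact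
    (isCompact_sphere c r)).mp hlog
  filter_upwards [hF, eventually_forall_ne_zero_of_tendstoLocallyUniformlyOn (hconv.mono hS)
    (isCompact_sphere c r) hgS.continuousOn h0,
    Metric.tendstoUniformlyOn_iff.mp hunif (r + 1)⁻¹ (by positivity)] with i hi hi0 hclose
  refine zeroMeasure_closedBall_eq_of_norm_logDeriv_sub_le (C := (r + 1)⁻¹) hr
    ((hi.analyticOnNhd hU).mono hsub) ((hg.analyticOnNhd hU).mono hsub) hi0 h0 ?_ ?_
  · exact fun z hz => by rw [← dist_eq_norm, dist_comm]; exact (hclose z hz).le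
  · rw [← div_eq_mul_inv, div_lt_one (by positivity)]
    exact lt_add_one r

lemma eventually_zeroMeasure_eq_zero {K : Set ℂ} (hK : IsCompact K)
    (hconv : TendstoLocallyUniformlyOn F g l K) (hg : ContinuousOn g K) (h0 : ∀ z ∈ K, g z ≠ 0) :
    ∀ᶠ i in l, zeroMeasure (F i) K = 0 :=
  (eventually_forall_ne_zero_of_tendstoLocallyUniformlyOn hconv hK hg h0).mono fun _ =>
    zeroMeasure_eq_zero_of_forall_ne_zero hK.measurableSet

variable {E : Type*} [NormedAddCommGroup E] [NormedSpace ℝ E] [CompleteSpace E] {φ : ℂ → E}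

theorem tendsto_setIntegral_zeroMeasure_closedBall (hU : IsOpen U) (hr : 0 < r)
    (hsub : closedBall c r ⊆ U) (hF : ∀ᶠ i in l, DifferentiableOn ℂ (F i) U)
    (hg : DifferentiableOn ℂ g U) (hconv : TendstoLocallyUniformlyOn F g l U)
    (h0 : ∀ z ∈ closedBall c r, z ≠ c → g z ≠ 0) (hφ : ContinuousOn φ (closedBall c r)) :
    Tendsto (fun i => ∫ z in closedBall c r, φ z ∂(zeroMeasure (F i))) l
      (𝓝 (∫ z in closedBall c r, φ z ∂(zeroMeasure g))) := by
  have hB := isCompact_closedBall c r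
  have hmass : ∀ᶠ i in l,
      zeroMeasure (F i) (closedBall c r) = zeroMeasure g (closedBall c r) :=
    eventually_zeroMeasure_closedBall_eq hU hr.le hsub hF hg hconv fun z hz =>
      h0 z (sphere_subset_closedBall hz) (ne_of_mem_sphere hz hr.ne')
  obtain ⟨N, hN⟩ := exists_natCast_eq_zeroMeasure hB ((hg.analyticOnNhd hU).mono hsub)
  rw [setIntegral_zeroMeasure_eq_smul measurableSet_closedBall h0]
  refine tendsto_setIntegral_of_concentrates (hφ.continuousAt (closedBall_mem_nhds c hr))
    ?_ ?_ ?_ ?_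
  · exact hF.mono fun i hi => integrableOn_zeroMeasure hB ((hi.analyticOnNhd hU).mono hsub) hφ
  · exact hmass.mono fun i hi => by rw [hi, hN]; exact ENNReal.natCast_ne_top N
  · exact tendsto_const_nhds.congr' (hmass.mono fun i hi => congrArg ENNReal.toReal hi.symm)
  · intro V hV
    have hsub' : closedBall c r \ interior V ⊆ U := Set.sdiff_subset.trans hsub
    refine (eventually_zeroMeasure_eq_zero (hB.diff isOpen_interior) (hconv.mono hsub')
      (hg.continuousOn.mono hsub') fun z hz => h0 z hz.1 ?_).mono fun i hi =>
        measure_mono_null (Set.sdiff_subset_sdiff_right interior_subset) hi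
    rintro rfl
    exact hz.2 (mem_interior_iff_mem_nhds.mpr hV)

theorem zero_counting_measures_tendsto_of_tendstoLocallyUniformly_general (hU : IsOpen U)
    (hF : ∀ᶠ i in l, DifferentiableOn ℂ (F i) U) (hconv : TendstoLocallyUniformlyOn F g l U)
    (hord : ∀ z ∈ U, analyticOrderAt g z ≠ ⊤) (hφ : Continuous φ) (hφc : HasCompactSupport φ)
    (hφU : tsupport φ ⊆ U) :
    Tendsto (fun i => ∫ z, φ z ∂(zeroMeasure (F i))) l (𝓝 (∫ z, φ z ∂(zeroMeasure g))) := by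
  rcases l.eq_or_neBot with rfl | _
  · exact tendsto_bot
  have hg : DifferentiableOn ℂ g U := hconv.differentiableOn hF hU
  have hiso : ∀ z ∈ U, ∀ᶠ w in 𝓝[≠] z, g w ≠ 0 := fun z hz =>
    eventually_nhdsNE_ne_zero_of_analyticOrderAt_ne_top (hg.analyticAt (hU.mem_nhds hz)) (hord z hz)
  have hfin : {z ∈ tsupport φ | g z = 0}.Finite :=
    finite_sep_of_eventually_nhdsNE_not hφc fun z hz => hiso z (hφU hz)
  obtain ⟨Z, hZ⟩ := hfin.exists_finset
  obtain ⟨r, hr, hrN, hdisj⟩ := exists_pairwiseDisjoint_closedBall_subset Z.finite_toSet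
    (N := fun c => U ∩ {z | z ≠ c → g z ≠ 0}) fun c hc =>
      have hcU := hφU ((hZ c).mp hc).1
      inter_mem (hU.mem_nhds hcU) (eventually_nhdsWithin_iff.mp (hiso c hcU))
  have hrU : ∀ c ∈ Z, closedBall c (r c) ⊆ U := fun c hc => (hrN c hc).trans Set.inter_subset_left
  set K := tsupport φ \ ⋃ c ∈ Z, ball c (r c)
  have hK : IsCompact K := hφc.diff (isOpen_biUnion fun _ _ => isOpen_ball)
  have hKU : K ⊆ U := Set.sdiff_subset.trans hφU
  have hK0 : ∀ z ∈ K, g z ≠ 0 := fun z hz hgz =>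
    have hzZ := (hZ z).mpr ⟨hz.1, hgz⟩
    hz.2 (Set.mem_biUnion hzZ (mem_ball_self (hr z hzZ)))
  have hsplit : ∀ f : ℂ → ℂ, DifferentiableOn ℂ f U → zeroMeasure f K = 0 →
      ∫ z, φ z ∂(zeroMeasure f) = ∑ c ∈ Z, ∫ z in closedBall c (r c), φ z ∂(zeroMeasure f) :=
    fun f hf => integral_zeroMeasure_eq_sum_closedBall hdisj
      (fun c hc => (hf.analyticOnNhd hU).mono (hrU c hc)) hφ
  rw [hsplit g hg (zeroMeasure_eq_zero_of_forall_ne_zero hK.measurableSet hK0)]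
  refine (tendsto_finsetSum Z fun c hc => tendsto_setIntegral_zeroMeasure_closedBall hU (hr c hc)
    (hrU c hc) hF hg hconv (fun z hz => (hrN c hc hz).2) hφ.continuousOn).congr' ?_
  filter_upwards [hF, eventually_zeroMeasure_eq_zero hK (hconv.mono hKU)
    (hg.continuousOn.mono hKU) hK0] with i hi hnull using (hsplit (F i) hi hnull).symm

end Hurwitz

/-- Hurwitz continuity of zero sets: if `g` is entire and not identically zero, and entire
functions `gₙ → g` locally uniformly, then the zero counting measures of `gₙ` converge
vaguely to that of `g` (counting multiplicities). -/
theorem zero_counting_measures_tendsto_of_tendstoLocallyUniformly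
    (g : ℂ → ℂ) (hg : Differentiable ℂ g) (hg0 : ∃ z, g z ≠ 0)
    (gs : ℕ → ℂ → ℂ) (hgs : ∀ n, Differentiable ℂ (gs n))
    (hconv : TendstoLocallyUniformly gs g atTop) :
    ∀ φ : ℂ → ℝ, Continuous φ → HasCompactSupport φ →
      Tendsto (fun n => ∫ z, φ z ∂(zeroMeasure (gs n))) atTop
        (nhds (∫ z, φ z ∂(zeroMeasure g))) := by
  exact fun φ hφ hφc => zero_counting_measures_tendsto_of_tendstoLocallyUniformly_general
    isOpen_univ (.of_forall fun n => (hgs n).differentiableOn)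
    (tendstoLocallyUniformlyOn_univ.mpr hconv)
    (analyticOrderAt_ne_top_of_isPreconnected_of_ne_zero (fun z _ => hg.analyticAt z)
      isPreconnected_univ (Set.mem_univ hg0.choose) hg0.choose_spec)
    hφ hφc (Set.subset_univ _)
end

section
/- Let G be a Gaussian analytic function on ℂ with covariance kernel K(z,w) = ∫₀¹ e^{(z+w̄)t} dt (and vanishing pseudo-covariance). Then almost surely all zeros of G are simple, i.e., G and G' have no common zero. -/
open MeasureTheory ProbabilityTheory Complex Finset

/-!
A double zero at `z` forces `G w = O(|w - z|²)` near `z`. Fix a bounded set on which `E|G|²` is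
bounded below; such sets cover the domain, because `E|G|²` is lower semicontinuous by Fatou. If `z`
lies in the set, then at the nearest point of an `ε`-net `|G|` is at most `M ε²`. For a circular
complex Gaussian this event has probability `O(ε⁴)`, while the net has only `O(ε⁻²)` points, so the
union bound tends to `0` with `ε`.
-/

open Filter Metric Asymptotics Module
open scoped Topology NNReal ENNReal

section Covering

variable {E : Type*} [NormedAddCommGroup E] [NormedSpace ℝ E] [FiniteDimensional ℝ E]
  {x : E} {R ε : ℝ≥0}

theorem card_mul_pow_le_of_isSeparated_of_subset_closedBall {t : Finset E} (hε : 0 < ε)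
    (htR : (t : Set E) ⊆ closedBall x R) (ht : IsSeparated ε (t : Set E)) :
    (#t * (ε / 2) ^ finrank ℝ E : ℝ≥0) ≤ (ε / 2 + R) ^ finrank ℝ E := by
  borelize E
  let μ : Measure E := Measure.addHaar
  have hball (c : E) {r : ℝ≥0} (hr : 0 < r) :
      μ (ball c r) = (r ^ finrank ℝ E : ℝ≥0) * μ (ball 0 1) := by
    rw [μ.addHaar_ball_of_pos c (NNReal.coe_pos.2 hr), ← NNReal.coe_pow, ENNReal.ofReal_coe_nnreal]
  have hdisj : (t : Set E).Pairwise (Function.onFun Disjoint fun c => ball c (ε / 2 : ℝ≥0)) := by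
    intro c hc d hd hcd
    refine ball_disjoint_ball ?_
    have hlt : ε < nndist c d := by simpa only [edist_nndist, ENNReal.coe_lt_coe] using ht hc hd hcd
    have : (ε : ℝ) < dist c d := hlt
    push_cast
    linarith
  have hsub : ⋃ c ∈ t, ball c (ε / 2 : ℝ≥0) ⊆ ball x (ε / 2 + R : ℝ≥0) := by
    refine Set.iUnion₂_subset fun c hc => ball_subset_ball' ?_
    rw [NNReal.coe_add]
    gcongr
    exact htR hc
  have hvol : (#t * (ε / 2) ^ finrank ℝ E : ℝ≥0) * μ (ball 0 1) ≤
      ((ε / 2 + R) ^ finrank ℝ E : ℝ≥0) * μ (ball 0 1) := by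
    calc (#t * (ε / 2) ^ finrank ℝ E : ℝ≥0) * μ (ball 0 1)
        = ∑ c ∈ t, μ (ball c (ε / 2 : ℝ≥0)) := by
          simp only [hball _ (half_pos hε), Finset.sum_const, nsmul_eq_mul, ENNReal.coe_mul,
            ENNReal.coe_natCast, mul_assoc]
      _ = μ (⋃ c ∈ t, ball c (ε / 2 : ℝ≥0)) :=
          (measure_biUnion_finset hdisj fun _ _ => measurableSet_ball).symm
      _ ≤ μ (ball x (ε / 2 + R : ℝ≥0)) := measure_mono hsub
      _ = ((ε / 2 + R) ^ finrank ℝ E : ℝ≥0) * μ (ball 0 1) := hball x (by positivity)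
  exact ENNReal.coe_le_coe.1 <| (ENNReal.mul_le_mul_iff_left (measure_ball_pos μ 0 one_pos).ne'
    measure_ball_lt_top.ne).1 hvol

theorem card_le_of_isSeparated_of_subset_closedBall {t : Finset E} (hε : 0 < ε)
    (htR : (t : Set E) ⊆ closedBall x R) (ht : IsSeparated ε (t : Set E)) :
    (#t : ℝ≥0) ≤ (1 + 2 * R / ε) ^ finrank ℝ E := by
  calc (#t : ℝ≥0) ≤ (ε / 2 + R) ^ finrank ℝ E / (ε / 2) ^ finrank ℝ E := by
        rw [le_div_iff₀ (by positivity)]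
        exact card_mul_pow_le_of_isSeparated_of_subset_closedBall hε htR ht
    _ = (1 + 2 * R / ε) ^ finrank ℝ E := by
        rw [← div_pow]
        congr 1
        field_simp

theorem exists_finset_isCover_card_le {s : Set E} (hε : 0 < ε) (hs : s ⊆ closedBall x R) :
    ∃ t : Finset E, (t : Set E) ⊆ s ∧ IsCover ε s (t : Set E) ∧
      (#t : ℝ≥0) ≤ (1 + 2 * R / ε) ^ finrank ℝ E := by
  have hpack : packingNumber ε s ≠ ⊤ := by
    obtain ⟨N, -, hN, hsN⟩ := exists_finite_isCover_of_totallyBounded (half_pos hε).ne'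
      ((isCompact_closedBall x R).totallyBounded.subset hs)
    have := packingNumber_two_mul_le_externalCoveringNumber (ε / 2) s
    rw [mul_div_cancel₀ ε two_ne_zero] at this
    exact ((this.trans hsN.externalCoveringNumber_le_encard).trans_lt hN.encard_lt_top).ne
  have hfin : (maximalSeparatedSet ε s).Finite := by
    rwa [← Set.encard_ne_top_iff, encard_maximalSeparatedSet hpack]
  lift maximalSeparatedSet ε s to Finset E using hfin with t ht
  have htsub : (t : Set E) ⊆ s := ht ▸ maximalSeparatedSet_subset
  exact ⟨t, htsub, ht ▸ isCover_maximalSeparatedSet hpack,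
    card_le_of_isSeparated_of_subset_closedBall hε (htsub.trans hs)
      (ht ▸ isSeparated_maximalSeparatedSet)⟩

end Covering

section SmallBall

variable {Ω E F : Type*} [MeasurableSpace Ω] {μ : Measure Ω} [NormedAddCommGroup F]
  {X : Ω → E → F} {p q : ℕ} {C : ℝ≥0} {s t : Set E}

/-- The field `X` has small-ball probabilities of order `p` on `s`: each `X · w` with `w ∈ s` lies
within `r` of the origin with probability at most `C * r ^ p`, uniformly in `w`. -/
def HasSmallBallBound (μ : Measure Ω) (X : Ω → E → F) (p : ℕ) (C : ℝ≥0) (s : Set E) : Prop :=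
  ∀ w ∈ s, ∀ r : ℝ≥0, μ {ω | ‖X ω w‖ ≤ r} ≤ C * r ^ p

namespace HasSmallBallBound

theorem mono (h : HasSmallBallBound μ X p C t) (hst : s ⊆ t) : HasSmallBallBound μ X p C s :=
  fun w hw => h w (hst hw)

theorem measure_exists_forall_norm_le [PseudoMetricSpace E] (h : HasSmallBallBound μ X p C s)
    {ε : ℝ≥0} {t : Finset E} (hts : (t : Set E) ⊆ s) (ht : IsCover ε s (t : Set E)) (r : ℝ≥0) :
    μ {ω | ∃ z ∈ s, ∀ w ∈ s, dist w z ≤ ε → ‖X ω w‖ ≤ r} ≤ #t * (C * r ^ p) := by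
  calc μ {ω | ∃ z ∈ s, ∀ w ∈ s, dist w z ≤ ε → ‖X ω w‖ ≤ r}
      ≤ μ (⋃ w ∈ t, {ω | ‖X ω w‖ ≤ r}) := by
        refine measure_mono ?_
        rintro ω ⟨z, hz, hsmall⟩
        obtain ⟨w, hw, hzw⟩ := ht hz
        refine Set.mem_biUnion hw (hsmall w (hts hw) ?_)
        rw [dist_comm]
        have : nndist z w ≤ ε := by
          simpa only [Set.mem_ofPred_eq, edist_nndist, ENNReal.coe_le_coe] using hzw
        exact this
    _ ≤ ∑ w ∈ t, μ {ω | ‖X ω w‖ ≤ r} := measure_biUnion_finset_le _ _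
    _ ≤ ∑ _w ∈ t, C * (r : ℝ≥0∞) ^ p := Finset.sum_le_sum fun w hw => h w (hts hw) r
    _ = #t * (C * r ^ p) := by rw [Finset.sum_const, nsmul_eq_mul]

variable [NormedAddCommGroup E] [NormedSpace ℝ E] [FiniteDimensional ℝ E]

theorem measure_exists_forall_norm_le_mul_dist_pow_le (h : HasSmallBallBound μ X p C s)
    {x : E} {R ε : ℝ≥0} (hs : s ⊆ closedBall x R) (hpq : finrank ℝ E ≤ q * p) (M : ℝ≥0)
    (hε : 0 < ε) :
    μ {ω | ∃ z ∈ s, ∀ w ∈ s, dist w z ≤ ε → ‖X ω w‖ ≤ M * dist w z ^ q} ≤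
      ((ε + 2 * R) ^ finrank ℝ E * C * M ^ p * ε ^ (q * p - finrank ℝ E) : ℝ≥0) := by
  obtain ⟨t, hts, hcover, hcard⟩ := exists_finset_isCover_card_le hε hs
  calc μ {ω | ∃ z ∈ s, ∀ w ∈ s, dist w z ≤ ε → ‖X ω w‖ ≤ M * dist w z ^ q}
      ≤ μ {ω | ∃ z ∈ s, ∀ w ∈ s, dist w z ≤ ε → ‖X ω w‖ ≤ (M * ε ^ q : ℝ≥0)} := by
        refine measure_mono ?_
        rintro ω ⟨z, hz, hsmall⟩
        refine ⟨z, hz, fun w hw hwz => (hsmall w hw hwz).trans ?_⟩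
        push_cast
        gcongr
    _ ≤ #t * (C * (M * ε ^ q : ℝ≥0) ^ p) := h.measure_exists_forall_norm_le hts hcover _
    _ ≤ ((1 + 2 * R / ε) ^ finrank ℝ E * (C * (M * ε ^ q) ^ p) : ℝ≥0) := by
        rw [← ENNReal.coe_natCast]
        exact_mod_cast mul_le_mul_left hcard _
    _ = ((ε + 2 * R) ^ finrank ℝ E * C * M ^ p * ε ^ (q * p - finrank ℝ E) : ℝ≥0) := by
        have hpow : ε ^ (q * p) = ε ^ (q * p - finrank ℝ E) * ε ^ finrank ℝ E :=
          (pow_sub_mul_pow ε hpq).symm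
        have hbase : (1 + 2 * R / ε) * ε = ε + 2 * R := by field_simp
        rw [mul_pow M, ← pow_mul, hpow, ← hbase, mul_pow]
        ring_nf

theorem measure_exists_forall_norm_le_mul_dist_pow_eq_zero (h : HasSmallBallBound μ X p C s)
    (hs : Bornology.IsBounded s) (hpq : finrank ℝ E < q * p) (M : ℝ≥0) {δ : ℝ≥0} (hδ : 0 < δ) :
    μ {ω | ∃ z ∈ s, ∀ w ∈ s, dist w z ≤ δ → ‖X ω w‖ ≤ M * dist w z ^ q} = 0 := by
  obtain ⟨R, hsR⟩ : ∃ R : ℝ≥0, s ⊆ closedBall 0 R := by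
    obtain ⟨R, hR⟩ := hs.subset_closedBall 0
    exact ⟨R.toNNReal, hR.trans (closedBall_subset_closedBall (Real.le_coe_toNNReal R))⟩
  let bound (ε : ℝ≥0) : ℝ≥0 := (ε + 2 * R) ^ finrank ℝ E * C * M ^ p * ε ^ (q * p - finrank ℝ E)
  have hlim : Tendsto (fun ε => (bound ε : ℝ≥0∞)) (𝓝[>] 0) (𝓝 0) := by
    have hcont : Continuous bound := by fun_prop
    have h0 : bound 0 = 0 := by simp [bound, (Nat.sub_pos_of_lt hpq).ne']
    exact ENNReal.tendsto_coe.2 (hcont.tendsto' 0 0 h0 |>.mono_left nhdsWithin_le_nhds)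
  refine le_antisymm (ge_of_tendsto hlim ?_) zero_le
  filter_upwards [Ioc_mem_nhdsGT hδ] with ε ⟨hε, hεδ⟩
  refine (measure_mono ?_).trans (h.measure_exists_forall_norm_le_mul_dist_pow_le hsR hpq.le M hε)
  rintro ω ⟨z, hz, hsmall⟩
  exact ⟨z, hz, fun w hw hwz => hsmall w hw (hwz.trans hεδ)⟩

theorem ae_forall_not_isBigO_of_isBounded (h : HasSmallBallBound μ X p C s)
    (hs : Bornology.IsBounded s) (hpq : finrank ℝ E < q * p) :
    ∀ᵐ ω ∂μ, ∀ z ∈ s, ¬ X ω =O[𝓝[s] z] fun w => dist w z ^ q := by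
  have hnull : ∀ᵐ ω ∂μ, ∀ n : ℕ, ¬ ∃ z ∈ s, ∀ w ∈ s, dist w z ≤ ((n + 1 : ℝ≥0)⁻¹ : ℝ≥0) →
      ‖X ω w‖ ≤ (n : ℝ≥0) * dist w z ^ q := by
    refine ae_all_iff.2 fun n => ?_
    simpa only [ae_iff, not_not] using
      h.measure_exists_forall_norm_le_mul_dist_pow_eq_zero hs hpq n (inv_pos.2 n.cast_add_one_pos)
  filter_upwards [hnull] with ω hω z hz hO
  obtain ⟨c, hc⟩ := hO.bound
  obtain ⟨δ, hδ, hball⟩ := mem_nhdsWithin_iff.1 hc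
  obtain ⟨m, hm⟩ := exists_nat_ge c
  obtain ⟨k, hk⟩ := exists_nat_one_div_lt hδ
  refine hω (max m k) ⟨z, hz, fun w hw hwz => ?_⟩
  have hwδ : dist w z < δ := by
    calc dist w z ≤ ((max m k : ℕ) + 1 : ℝ)⁻¹ := by exact_mod_cast hwz
      _ ≤ 1 / ((k : ℝ) + 1) := by
        rw [one_div]
        gcongr
        exact le_max_right m k
      _ < δ := hk
  calc ‖X ω w‖ ≤ c * ‖dist w z ^ q‖ := hball ⟨hwδ, hw⟩
    _ = c * dist w z ^ q := by rw [Real.norm_of_nonneg (by positivity)]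
    _ ≤ ((max m k : ℕ) : ℝ≥0) * dist w z ^ q := by
      gcongr
      exact hm.trans (by exact_mod_cast le_max_left m k)

end HasSmallBallBound

theorem ae_forall_not_isBigO_of_locally_hasSmallBallBound
    [NormedAddCommGroup E] [NormedSpace ℝ E] [FiniteDimensional ℝ E]
    (h : ∀ z ∈ s, ∃ V ∈ 𝓝[s] z, ∃ C, HasSmallBallBound μ X p C V)
    (hpq : finrank ℝ E < q * p) :
    ∀ᵐ ω ∂μ, ∀ z ∈ s, ¬ X ω =O[𝓝[s] z] fun w => dist w z ^ q := by
  choose! V hV C hC using h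
  obtain ⟨T, hTs, hT, hcover⟩ := TopologicalSpace.countable_cover_nhdsWithin
    fun z hz => inter_mem (inter_mem (hV z hz) self_mem_nhdsWithin)
      (mem_nhdsWithin_of_mem_nhds (ball_mem_nhds z one_pos))
  have hpiece : ∀ x ∈ T, ∀ᵐ ω ∂μ, ∀ z ∈ V x ∩ s ∩ ball x 1,
      ¬ X ω =O[𝓝[V x ∩ s ∩ ball x 1] z] fun w => dist w z ^ q := fun x hx =>
    ((hC x (hTs hx)).mono (Set.inter_subset_left.trans Set.inter_subset_left)
      ).ae_forall_not_isBigO_of_isBounded (isBounded_ball.subset Set.inter_subset_right) hpq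
  filter_upwards [(ae_ball_iff hT).2 hpiece] with ω hω z hz hO
  obtain ⟨x, hx, hzx⟩ := Set.mem_iUnion₂.1 (hcover hz)
  exact hω x hx z hzx
    (hO.mono (nhdsWithin_mono z (Set.inter_subset_left.trans Set.inter_subset_right)))

end SmallBall

section Order

variable {𝕜 E : Type*} [NontriviallyNormedField 𝕜] [NormedAddCommGroup E] [NormedSpace 𝕜 E]
  {f : 𝕜 → E} {z : 𝕜}

theorem isBigO_dist_pow_of_le_analyticOrderAt {n : ℕ} (hf : AnalyticAt 𝕜 f z)
    (hn : n ≤ analyticOrderAt f z) : f =O[𝓝 z] fun w => dist w z ^ n := by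
  obtain ⟨g, hg, hfg⟩ := (natCast_le_analyticOrderAt hf).1 hn
  have hpow : (fun w => (w - z) ^ n) =O[𝓝 z] fun w => dist w z ^ n :=
    isBigO_of_le _ fun w => by rw [norm_pow, norm_pow, dist_eq_norm, norm_norm]
  have hO : (fun w => (w - z) ^ n • g w) =O[𝓝 z] fun w => dist w z ^ n * (1 : ℝ) :=
    hpow.smul (hg.continuousAt.isBigO_one ℝ)
  simpa only [mul_one] using EventuallyEq.trans_isBigO hfg hO

theorem isBigO_dist_sq_of_deriv_eq_zero [CharZero 𝕜] [CompleteSpace E] (hf : AnalyticAt 𝕜 f z)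
    (h0 : f z = 0) (h1 : deriv f z = 0) : f =O[𝓝 z] fun w => dist w z ^ 2 := by
  refine isBigO_dist_pow_of_le_analyticOrderAt hf
    ((natCast_le_analyticOrderAt_iff_iteratedDeriv_eq_zero hf).2 fun i hi => ?_)
  interval_cases i
  · rwa [iteratedDeriv_zero]
  · rwa [iteratedDeriv_one]

end Order

section Fatou

variable {Ω T : Type*} [MeasurableSpace Ω] {μ : Measure Ω} [TopologicalSpace T]
  [FirstCountableTopology T] {f : Ω → T → ℝ≥0∞}

theorem lowerSemicontinuous_lintegral (hmeas : ∀ t, AEMeasurable (fun ω => f ω t) μ)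
    (hf : ∀ᵐ ω ∂μ, LowerSemicontinuous (f ω)) :
    LowerSemicontinuous fun t => ∫⁻ ω, f ω t ∂μ := fun t => by
  refine lowerSemicontinuousAt_iff_le_liminf.2 ?_
  calc ∫⁻ ω, f ω t ∂μ ≤ ∫⁻ ω, liminf (f ω) (𝓝 t) ∂μ :=
        lintegral_mono_ae (hf.mono fun ω hω => lowerSemicontinuousAt_iff_le_liminf.1 (hω t))
    _ ≤ liminf (fun t => ∫⁻ ω, f ω t ∂μ) (𝓝 t) := lintegral_liminf_le' hmeas

theorem lowerSemicontinuousOn_lintegral {s : Set T}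
    (hmeas : ∀ t ∈ s, AEMeasurable (fun ω => f ω t) μ)
    (hf : ∀ᵐ ω ∂μ, LowerSemicontinuousOn (f ω) s) :
    LowerSemicontinuousOn (fun t => ∫⁻ ω, f ω t ∂μ) s :=
  lowerSemicontinuous_restrict_iff.1 <|
    lowerSemicontinuous_lintegral (f := fun ω => s.domRestrict (f ω)) (fun t => hmeas t t.2)
      (hf.mono fun _ => lowerSemicontinuous_restrict_iff.2)

theorem lowerSemicontinuousOn_integral {g : Ω → T → ℝ} {s : Set T}
    (hfint : ∀ t ∈ s, Integrable (fun ω => g ω t) μ)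
    (hnonneg : ∀ t ∈ s, 0 ≤ᵐ[μ] fun ω => g ω t)
    (hf : ∀ᵐ ω ∂μ, LowerSemicontinuousOn (g ω) s) :
    LowerSemicontinuousOn (fun t => ∫ ω, g ω t ∂μ) s := by
  have hlsc : LowerSemicontinuousOn (fun t => ∫⁻ ω, ENNReal.ofReal (g ω t) ∂μ) s :=
    lowerSemicontinuousOn_lintegral (fun t ht => (hfint t ht).aemeasurable.ennreal_ofReal) <|
      hf.mono fun ω hω =>
        ENNReal.continuous_ofReal.comp_lowerSemicontinuousOn hω ENNReal.ofReal_mono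
  intro t ht y hy
  rcases lt_or_ge y 0 with hy0 | hy0
  · filter_upwards [self_mem_nhdsWithin] with u hu
    exact hy0.trans_le (integral_nonneg_of_ae (hnonneg u hu))
  · have hty : ENNReal.ofReal y < ∫⁻ ω, ENNReal.ofReal (g ω t) ∂μ := by
      rwa [← ofReal_integral_eq_lintegral_ofReal (hfint t ht) (hnonneg t ht),
        ENNReal.ofReal_lt_ofReal_iff_of_nonneg hy0]
    filter_upwards [self_mem_nhdsWithin, hlsc t ht _ hty] with u hu huy
    rwa [← ofReal_integral_eq_lintegral_ofReal (hfint u hu) (hnonneg u hu), gt_iff_lt,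
      ENNReal.ofReal_lt_ofReal_iff_of_nonneg hy0] at huy

end Fatou

theorem gaussianReal_le_mul_volume (m : ℝ) {v : ℝ≥0} (hv : v ≠ 0) (s : Set ℝ) :
    gaussianReal m v s ≤ ENNReal.ofReal (√(2 * Real.pi * v))⁻¹ * volume s := by
  rw [gaussianReal_apply m hv, ← setLIntegral_const]
  refine lintegral_mono fun x => ENNReal.ofReal_le_ofReal ?_
  rw [gaussianPDFReal]
  refine mul_le_of_le_one_right (by positivity) (Real.exp_le_one_iff.2 ?_)
  rw [neg_div]
  exact neg_nonpos.2 (by positivity)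

theorem apply_eq_re_mul (L : ℂ →ₗ[ℝ] ℝ) (x : ℂ) : L x = ((L 1 - L I * I) * x).re := by
  calc L x = L (x.re • (1 : ℂ) + x.im • I) := by simp only [real_smul, mul_one, re_add_im]
    _ = x.re * L 1 + x.im * L I := by
      rw [map_add, map_smul, map_smul, smul_eq_mul, smul_eq_mul]
    _ = ((L 1 - L I * I) * x).re := by simp [mul_comm]

/-- `X` is a centered complex Gaussian variable with vanishing pseudo-variance `E[X²]`, so that its
law is invariant under rotations about the origin. Degenerate laws are allowed. -/
structure IsCircularGaussian {Ω : Type*} [MeasurableSpace Ω] (X : Ω → ℂ) (P : Measure Ω) :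
    Prop where
  hasGaussianLaw : HasGaussianLaw X P
  integral_eq_zero : ∫ ω, X ω ∂P = 0
  integral_sq_eq_zero : ∫ ω, X ω ^ 2 ∂P = 0

namespace IsCircularGaussian

variable {Ω : Type*} [MeasurableSpace Ω] {P : Measure Ω} {X : Ω → ℂ}

theorem of_map_re_mul
    (h : ∀ c : ℂ, ∃ v : ℝ≥0, P.map (fun ω => (c * X ω).re) = gaussianReal 0 v)
    (hsq : ∫ ω, X ω ^ 2 ∂P = 0) : IsCircularGaussian X P := by
  have hmeas (c : ℂ) : AEMeasurable (fun ω => (c * X ω).re) P := by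
    obtain ⟨v, hv⟩ := h c
    exact .of_map_ne_zero (hv ▸ IsProbabilityMeasure.ne_zero _)
  have hX : AEMeasurable X P := by
    have hre : AEMeasurable (fun ω => (X ω).re) P := by simpa using hmeas 1
    have him : AEMeasurable (fun ω => (X ω).im) P := by simpa using hmeas (-I)
    exact aemeasurable_of_re_im hre him
  have hlaw : HasGaussianLaw X P := by
    refine ⟨isGaussian_of_map_eq_gaussianReal fun L => ?_⟩
    obtain ⟨v, hv⟩ := h (L 1 - L I * I)
    refine ⟨0, v, ?_⟩
    rw [AEMeasurable.map_map_of_aemeasurable (by fun_prop) hX, ← hv]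
    exact congrArg (fun Y => P.map Y) (funext fun ω => apply_eq_re_mul L (X ω))
  have hmean (c : ℂ) : ∫ ω, (c * X ω).re ∂P = 0 := by
    obtain ⟨v, hv⟩ := h c
    rw [← integral_id_gaussianReal (μ := 0) (v := v), ← hv, integral_map (hmeas c) (by fun_prop)]
  refine ⟨hlaw, ?_, hsq⟩
  have hfint := hlaw.integrable
  apply Complex.ext
  · exact (reCLM.integral_comp_comm hfint).symm.trans (by simpa using hmean 1)
  · exact (imCLM.integral_comp_comm hfint).symm.trans (by simpa using hmean (-I))

variable (h : IsCircularGaussian X P)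
include h

theorem hasGaussianLaw_re : HasGaussianLaw (fun ω => (X ω).re) P := h.hasGaussianLaw.map_fun reCLM

theorem hasGaussianLaw_im : HasGaussianLaw (fun ω => (X ω).im) P := h.hasGaussianLaw.map_fun imCLM

theorem integrable_norm_sq : Integrable (fun ω => ‖X ω‖ ^ 2) P :=
  h.hasGaussianLaw.memLp_two.integrable_norm_pow two_ne_zero

theorem integrable_sq : Integrable (fun ω => X ω ^ 2) P := by
  simp only [sq]
  exact h.hasGaussianLaw.memLp_two.integrable_mul h.hasGaussianLaw.memLp_two

theorem integrable_re_sq : Integrable (fun ω => (X ω ^ 2).re) P := h.integrable_sq.re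

theorem integral_re : ∫ ω, (X ω).re ∂P = 0 :=
  (reCLM.integral_comp_comm h.hasGaussianLaw.integrable).trans
    (by rw [h.integral_eq_zero, map_zero])

theorem integral_im : ∫ ω, (X ω).im ∂P = 0 :=
  (imCLM.integral_comp_comm h.hasGaussianLaw.integrable).trans
    (by rw [h.integral_eq_zero, map_zero])

theorem integral_re_sq : ∫ ω, (X ω ^ 2).re ∂P = 0 :=
  (reCLM.integral_comp_comm h.integrable_sq).trans (by rw [h.integral_sq_eq_zero, map_zero])

theorem integral_im_sq : ∫ ω, (X ω ^ 2).im ∂P = 0 :=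
  (imCLM.integral_comp_comm h.integrable_sq).trans (by rw [h.integral_sq_eq_zero, map_zero])

theorem variance_re : Var[fun ω => (X ω).re; P] = (∫ ω, ‖X ω‖ ^ 2 ∂P) / 2 := by
  have hpoint (x : ℂ) : x.re ^ 2 = (‖x‖ ^ 2 + (x ^ 2).re) / 2 := by
    rw [Complex.sq_norm, normSq_apply, sq x, mul_re]
    ring
  rw [variance_of_integral_eq_zero h.hasGaussianLaw_re.aemeasurable h.integral_re]
  simp only [hpoint]
  rw [integral_div, integral_add h.integrable_norm_sq h.integrable_re_sq, h.integral_re_sq,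
    add_zero]

theorem variance_im : Var[fun ω => (X ω).im; P] = (∫ ω, ‖X ω‖ ^ 2 ∂P) / 2 := by
  have hpoint (x : ℂ) : x.im ^ 2 = (‖x‖ ^ 2 - (x ^ 2).re) / 2 := by
    rw [Complex.sq_norm, normSq_apply, sq x, mul_re]
    ring
  rw [variance_of_integral_eq_zero h.hasGaussianLaw_im.aemeasurable h.integral_im]
  simp only [hpoint]
  rw [integral_div, integral_sub h.integrable_norm_sq h.integrable_re_sq, h.integral_re_sq,
    sub_zero]

theorem covariance_re_im : cov[fun ω => (X ω).re, fun ω => (X ω).im; P] = 0 := by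
  have hpoint (x : ℂ) : x.re * x.im = (x ^ 2).im / 2 := by
    rw [sq x, mul_im]
    ring
  have := h.hasGaussianLaw.isProbabilityMeasure
  rw [covariance_eq_sub h.hasGaussianLaw_re.memLp_two h.hasGaussianLaw_im.memLp_two, h.integral_re,
    zero_mul, sub_zero]
  simp only [Pi.mul_apply, hpoint, integral_div, h.integral_im_sq, zero_div]

theorem indepFun_re_im : IndepFun (fun ω => (X ω).re) (fun ω => (X ω).im) P :=
  HasGaussianLaw.indepFun_of_covariance_eq_zero
    (h.hasGaussianLaw.map_fun (reCLM.prod imCLM)) h.covariance_re_im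

theorem map_re :
    P.map (fun ω => (X ω).re) = gaussianReal 0 ((∫ ω, ‖X ω‖ ^ 2 ∂P) / 2).toNNReal := by
  rw [h.hasGaussianLaw_re.map_eq_gaussianReal, h.integral_re, h.variance_re]

theorem map_im :
    P.map (fun ω => (X ω).im) = gaussianReal 0 ((∫ ω, ‖X ω‖ ^ 2 ∂P) / 2).toNNReal := by
  rw [h.hasGaussianLaw_im.map_eq_gaussianReal, h.integral_im, h.variance_im]

theorem measure_norm_le (hpos : 0 < ∫ ω, ‖X ω‖ ^ 2 ∂P) {r : ℝ} (hr : 0 ≤ r) :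
    P {ω | ‖X ω‖ ≤ r} ≤ ENNReal.ofReal (4 * r ^ 2 / (Real.pi * ∫ ω, ‖X ω‖ ^ 2 ∂P)) := by
  set σsq := ∫ ω, ‖X ω‖ ^ 2 ∂P
  have hv : (σsq / 2).toNNReal ≠ 0 := (Real.toNNReal_pos.2 (half_pos hpos)).ne'
  let J := Set.Icc (-r) r
  have hJ : gaussianReal 0 (σsq / 2).toNNReal J ≤ ENNReal.ofReal (2 * r / √(Real.pi * σsq)) := by
    refine (gaussianReal_le_mul_volume 0 hv J).trans_eq ?_
    rw [Real.volume_Icc, ← ENNReal.ofReal_mul (by positivity),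
      Real.coe_toNNReal _ (half_pos hpos).le]
    congr 1
    rw [show 2 * Real.pi * (σsq / 2) = Real.pi * σsq by ring]
    ring
  calc P {ω | ‖X ω‖ ≤ r}
      ≤ P ((fun ω => (X ω).re) ⁻¹' J ∩ (fun ω => (X ω).im) ⁻¹' J) :=
        measure_mono fun ω hω => ⟨abs_le.1 ((abs_re_le_norm _).trans hω),
          abs_le.1 ((abs_im_le_norm _).trans hω)⟩
    _ = P.map (fun ω => (X ω).re) J * P.map (fun ω => (X ω).im) J := by
        rw [h.indepFun_re_im.measure_inter_preimage_eq_mul _ _ measurableSet_Icc measurableSet_Icc,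
          Measure.map_apply_of_aemeasurable h.hasGaussianLaw_re.aemeasurable measurableSet_Icc,
          Measure.map_apply_of_aemeasurable h.hasGaussianLaw_im.aemeasurable measurableSet_Icc]
    _ ≤ ENNReal.ofReal (2 * r / √(Real.pi * σsq)) * ENNReal.ofReal (2 * r / √(Real.pi * σsq)) := by
        rw [h.map_re, h.map_im]
        gcongr
    _ = ENNReal.ofReal (4 * r ^ 2 / (Real.pi * σsq)) := by
        rw [← ENNReal.ofReal_mul (by positivity), div_mul_div_comm,
          Real.mul_self_sqrt (by positivity)]
        congr 2
        ring

end IsCircularGaussian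

section GaussianAnalyticFunction

variable {Ω : Type*} [MeasurableSpace Ω] {P : Measure Ω}

theorem hasSmallBallBound_of_isCircularGaussian {T : Type*} {G : Ω → T → ℂ} {s : Set T}
    {κ : ℝ} (hκ : 0 < κ) (hG : ∀ t ∈ s, IsCircularGaussian (fun ω => G ω t) P)
    (hvar : ∀ t ∈ s, κ ≤ ∫ ω, ‖G ω t‖ ^ 2 ∂P) :
    HasSmallBallBound P G 2 (4 / (Real.pi * κ)).toNNReal s := by
  intro t ht r
  calc P {ω | ‖G ω t‖ ≤ r}
      ≤ ENNReal.ofReal (4 * r ^ 2 / (Real.pi * ∫ ω, ‖G ω t‖ ^ 2 ∂P)) :=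
        (hG t ht).measure_norm_le (hκ.trans_le (hvar t ht)) r.coe_nonneg
    _ ≤ ENNReal.ofReal (4 / (Real.pi * κ) * r ^ 2) := by
        rw [div_mul_eq_mul_div]
        gcongr
        exact hvar t ht
    _ = (4 / (Real.pi * κ)).toNNReal * (r : ℝ≥0∞) ^ 2 := by
        rw [ENNReal.ofReal_mul (by positivity), ENNReal.ofReal_pow r.coe_nonneg,
          ENNReal.ofReal_coe_nnreal, ENNReal.ofReal]

theorem exists_mem_nhdsWithin_hasSmallBallBound {T : Type*} [TopologicalSpace T]
    [FirstCountableTopology T] {G : Ω → T → ℂ} {s : Set T}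
    (hcont : ∀ᵐ ω ∂P, ContinuousOn (G ω) s)
    (hgauss : ∀ t ∈ s, IsCircularGaussian (fun ω => G ω t) P) {t : T} (ht : t ∈ s)
    (hpos : 0 < ∫ ω, ‖G ω t‖ ^ 2 ∂P) :
    ∃ V ∈ 𝓝[s] t, ∃ C, HasSmallBallBound P G 2 C V := by
  have hlsc : LowerSemicontinuousOn (fun u => ∫ ω, ‖G ω u‖ ^ 2 ∂P) s :=
    lowerSemicontinuousOn_integral (fun u hu => (hgauss u hu).integrable_norm_sq)
      (fun u _ => ae_of_all _ fun _ => sq_nonneg _)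
      (hcont.mono fun ω hω => (hω.norm.pow 2).lowerSemicontinuousOn)
  obtain ⟨κ, hκ, hκt⟩ := exists_between hpos
  refine ⟨s ∩ {u | κ < ∫ ω, ‖G ω u‖ ^ 2 ∂P}, inter_mem self_mem_nhdsWithin (hlsc t ht κ hκt), _,
    hasSmallBallBound_of_isCircularGaussian hκ (fun u hu => hgauss u hu.1) fun u hu => hu.2.le⟩

theorem integral_norm_sq_pos_of_integral_mul_conj_eq {X : Ω → ℂ} {z : ℂ}
    (h : ∫ ω, X ω * (starRingEnd ℂ) (X ω) ∂P =
      ∫ t in (0 : ℝ)..1, exp ((z + (starRingEnd ℂ) z) * (t : ℂ))) :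
    0 < ∫ ω, ‖X ω‖ ^ 2 ∂P := by
  have hvar : ∫ ω, ‖X ω‖ ^ 2 ∂P = ∫ t in (0 : ℝ)..1, Real.exp (2 * z.re * t) := by
    apply ofReal_injective
    rw [← integral_complex_ofReal, ← intervalIntegral.integral_ofReal]
    simpa only [mul_conj, add_conj, ← Complex.sq_norm, ofReal_exp, ofReal_mul] using h
  rw [hvar]
  exact intervalIntegral.intervalIntegral_pos_of_pos
    (Continuous.intervalIntegrable (by fun_prop) _ _) (fun t => Real.exp_pos _) one_pos

theorem gaf_zeros_are_simple_general {U : Set ℂ} (hU : IsOpen U) {G : Ω → ℂ → ℂ}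
    (hanalytic : ∀ᵐ ω ∂P, DifferentiableOn ℂ (G ω) U)
    (hgauss : ∀ z ∈ U, IsCircularGaussian (fun ω => G ω z) P)
    (hpos : ∀ z ∈ U, 0 < ∫ ω, ‖G ω z‖ ^ 2 ∂P) :
    ∀ᵐ ω ∂P, ∀ z ∈ U, G ω z = 0 → deriv (G ω) z ≠ 0 := by
  have hcont : ∀ᵐ ω ∂P, ContinuousOn (G ω) U := hanalytic.mono fun _ hω => hω.continuousOn
  have hnotO : ∀ᵐ ω ∂P, ∀ z ∈ U, ¬ G ω =O[𝓝[U] z] fun w => dist w z ^ 2 :=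
    ae_forall_not_isBigO_of_locally_hasSmallBallBound (p := 2)
      (fun z hz => exists_mem_nhdsWithin_hasSmallBallBound hcont hgauss hz (hpos z hz))
      (by norm_num [finrank_real_complex])
  filter_upwards [hanalytic, hnotO] with ω hω hωO z hz h0 h1
  have hanal : AnalyticAt ℂ (G ω) z := hω.analyticAt (hU.mem_nhds hz)
  exact hωO z hz ((isBigO_dist_sq_of_deriv_eq_zero hanal h0 h1).mono nhdsWithin_le_nhds)

end GaussianAnalyticFunction

/-- If `G` is a centered Gaussian analytic function on `ℂ` with vanishing pseudo-covariance
`E[G(z)G(w)] = 0` and covariance kernel `E[G(z) conj(G(w))] = ∫₀¹ e^{(z+conj w)t} dt`, then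
almost surely all zeros of `G` are simple: `G` and `G'` have no common zero. -/
theorem gaf_zeros_are_simple
    {Ω : Type*} [MeasurableSpace Ω] (P : Measure Ω) [IsProbabilityMeasure P]
    (G : Ω → ℂ → ℂ)
    (hmeas : ∀ z, Measurable (fun ω => G ω z))
    (hentire : ∀ᵐ ω ∂P, Differentiable ℂ (G ω))
    -- centered complex Gaussian process: every finite linear functional of `G` is a
    -- centered real Gaussian after taking real parts
    (hgauss : ∀ (m : ℕ) (c zpt : Fin m → ℂ), ∃ v : NNReal,
      P.map (fun ω => (∑ i, c i * G ω (zpt i)).re) = gaussianReal 0 v)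
    -- vanishing pseudo-covariance
    (hpseudo : ∀ z w : ℂ, ∫ ω, G ω z * G ω w ∂P = 0)
    -- covariance kernel `K(z,w) = ∫₀¹ e^{(z + conj w) t} dt`
    (hcov : ∀ z w : ℂ, ∫ ω, G ω z * (starRingEnd ℂ) (G ω w) ∂P
      = ∫ t in (0:ℝ)..1, Complex.exp ((z + (starRingEnd ℂ) w) * (t : ℂ))) :
    ∀ᵐ ω ∂P, ∀ z : ℂ, G ω z = 0 → deriv (G ω) z ≠ 0 := by
  have hcirc (z : ℂ) : IsCircularGaussian (fun ω => G ω z) P := by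
    refine .of_map_re_mul (fun c => ?_) (by simpa only [sq] using hpseudo z z)
    simpa only [Fin.sum_univ_one] using hgauss 1 (fun _ => c) fun _ => z
  simpa only [Set.mem_univ, true_imp_iff] using
    gaf_zeros_are_simple_general isOpen_univ (hentire.mono fun _ hω => hω.differentiableOn)
      (fun z _ => hcirc z) fun z _ => integral_norm_sq_pos_of_integral_mul_conj_eq (hcov z z)
end

section
/- Let Λ be a locally finite simple point configuration in ℂ (no multiplicities), let k ≥ 1, and let Φ : ℂ^k → ℝ be continuous with compact support. Define T_Φ(Λ) = Σ Φ(α₁,…,α_k), the sum over all k-tuples of pairwise distinct points of Λ. Then T_Φ is continuous at Λ with respect to the vague topology on configurations: if Λₙ → Λ vaguely then T_Φ(Λₙ) → T_Φ(Λ). -/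
open MeasureTheory Filter Finset

/-- A point configuration in `ℂ`: a locally finite integer-valued atomic measure. -/
def IsPointConfig (μ : Measure ℂ) : Prop :=
  (∀ K : Set ℂ, IsCompact K → μ K < ⊤) ∧
  ∃ m : ℂ → ℕ, μ = Measure.sum (fun z : ℂ => (m z : ENNReal) • Measure.dirac z)

/-- The `k`-point statistic `T_Φ(Λ) = Σ_{(α₁,…,α_k) pairwise distinct points of Λ}
Φ(α₁,…,α_k)`, summing over ordered `k`-tuples of distinct points (weighted by the product of
multiplicities; these are all `1` for a simple configuration). -/
noncomputable def kPointStat (k : ℕ) (Φ : (Fin k → ℂ) → ℝ) (μ : Measure ℂ) : ℝ :=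
  ∑' p : {p : Fin k → ℂ // Function.Injective p},
    (∏ i, (μ {p.1 i}).toReal) * Φ p.1

/-!
Let `K` be a compact set containing the coordinates of every point of the support of `Φ`. Like the
roots in Hurwitz's theorem, the atoms in `K` of a vaguely convergent sequence of point measures
converge to the atoms of the limit: near a simple atom of the limit there is eventually exactly one
atom, again simple, because small neighbourhoods eventually have positive mass less than `2`; away
from the atoms of the limit the mass is eventually less than `1`, hence zero. So `T_Φ` is eventually
a sum over a fixed finite index set, and each term converges by continuity of `Φ`.
-/

open scoped ENNReal Topology

theorem eventually_injective_of_tendsto {α ι X : Type*} [Finite α] [TopologicalSpace X] [T2Space X]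
    {l : Filter ι} {φ : ι → α → X} {f : α → X} (hf : Function.Injective f)
    (hφ : ∀ a, Tendsto (fun i => φ i a) l (𝓝 (f a))) :
    ∀ᶠ i in l, Function.Injective (φ i) := by
  have hne : ∀ᶠ i in l, ∀ a b, a ≠ b → φ i a ≠ φ i b :=
    eventually_all.2 fun a => eventually_all.2 fun b => eventually_imp_distrib_left.2 fun hab =>
      ((hφ a).prodMk_nhds (hφ b)).eventually_mem
        (isClosed_diagonal.isOpen_compl.mem_nhds (hf.ne hab))
  exact hne.mono fun i hi a b => not_imp_not.1 (hi a b)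

theorem exists_isCompact_forall_mem_of_hasCompactSupport {X κ E : Type*} [Finite κ]
    [TopologicalSpace X] [Zero E] {Φ : (κ → X) → E} (hΦ : HasCompactSupport Φ) :
    ∃ K : Set X, IsCompact K ∧ ∀ p, Φ p ≠ 0 → ∀ i, p i ∈ K :=
  ⟨⋃ i, Function.eval i '' tsupport Φ,
    isCompact_iUnion fun i => hΦ.isCompact.image (continuous_apply i),
    fun p hp i => Set.mem_iUnion.2 ⟨i, p, subset_tsupport Φ hp, rfl⟩⟩

section PointMeasure

variable {X : Type*} [MeasurableSpace X] [TopologicalSpace X] {μ : Measure X}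

/-- A point measure: an integer-valued sum of Dirac masses, finite on compact sets. This is
`IsPointConfig` on an arbitrary space. -/
structure IsPointMeasure (μ : Measure X) : Prop where
  measure_lt_top : ∀ K : Set X, IsCompact K → μ K < ⊤
  exists_eq_sum_dirac : ∃ m : X → ℕ, μ = Measure.sum fun x => (m x : ℝ≥0∞) • Measure.dirac x

namespace IsPointMeasure

theorem isFiniteMeasureOnCompacts (hμ : IsPointMeasure μ) : IsFiniteMeasureOnCompacts μ :=
  ⟨fun K hK => hμ.measure_lt_top K hK⟩

section MeasurableSingleton

variable [MeasurableSingletonClass X]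

theorem measure_eq_zero_of_forall_singleton (hμ : IsPointMeasure μ) {A : Set X}
    (hA : MeasurableSet A) (h : ∀ x ∈ A, μ {x} = 0) : μ A = 0 := by
  obtain ⟨m, rfl⟩ := hμ.exists_eq_sum_dirac
  rw [Measure.sum_apply _ hA, ENNReal.tsum_eq_zero]
  intro x
  by_cases hx : x ∈ A
  · have hm : m x = 0 := by
      simpa only [Measure.sum_smul_dirac_singleton, Nat.cast_eq_zero] using h x hx
    simp [hm]
  · simp [Measure.dirac_apply' _ hA, hx]

theorem exists_natCast_eq_measure_singleton (hμ : IsPointMeasure μ) (x : X) :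
    ∃ n : ℕ, μ {x} = n := by
  obtain ⟨m, rfl⟩ := hμ.exists_eq_sum_dirac
  exact ⟨m x, Measure.sum_smul_dirac_singleton⟩

theorem one_le_measure_singleton (hμ : IsPointMeasure μ) {x : X} (hx : μ {x} ≠ 0) :
    1 ≤ μ {x} := by
  obtain ⟨n, hn⟩ := hμ.exists_natCast_eq_measure_singleton x
  rw [hn] at hx ⊢
  exact_mod_cast Nat.one_le_iff_ne_zero.2 (mod_cast hx)

theorem measure_singleton_eq_one (hμ : IsPointMeasure μ) {x : X} (hx : μ {x} ≠ 0)
    (hx2 : μ {x} < 2) : μ {x} = 1 := by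
  obtain ⟨n, hn⟩ := hμ.exists_natCast_eq_measure_singleton x
  rw [hn] at hx hx2 ⊢
  norm_cast at hx hx2 ⊢
  lia

theorem measure_singleton_eq_zero_of_lt_one (hμ : IsPointMeasure μ) {A : Set X} (hA : μ A < 1)
    {x : X} (hx : x ∈ A) : μ {x} = 0 := by
  by_contra h0
  exact hA.not_ge
    ((hμ.one_le_measure_singleton h0).trans (measure_mono (Set.singleton_subset_iff.2 hx)))

theorem atom_unique_of_measure_lt_two (hμ : IsPointMeasure μ) {A : Set X} (hA : μ A < 2) {x y : X}
    (hx : x ∈ A) (hy : y ∈ A) (hx0 : μ {x} ≠ 0) (hy0 : μ {y} ≠ 0) : x = y := by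
  by_contra hne
  refine hA.not_ge ?_
  calc (2 : ℝ≥0∞) = 1 + 1 := one_add_one_eq_two.symm
    _ ≤ μ {x} + μ {y} :=
      add_le_add (hμ.one_le_measure_singleton hx0) (hμ.one_le_measure_singleton hy0)
    _ = μ ({x} ∪ {y}) :=
      (measure_union (Set.disjoint_singleton.2 hne) (measurableSet_singleton y)).symm
    _ ≤ μ A := measure_mono
      (Set.union_subset (Set.singleton_subset_iff.2 hx) (Set.singleton_subset_iff.2 hy))

theorem finite_atoms (hμ : IsPointMeasure μ) {K : Set X} (hK : IsCompact K) :
    {x ∈ K | μ {x} ≠ 0}.Finite := by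
  have hfin : {x : K | 1 ≤ μ {(x : X)}}.Finite :=
    Measure.finite_const_le_meas_of_disjoint_iUnion μ one_pos
      (fun x : K => measurableSet_singleton (x : X))
      (fun x y hxy => Set.disjoint_singleton.2 (Subtype.coe_ne_coe.2 hxy))
      (by simpa only [Set.iUnion_of_singleton_coe] using (hμ.measure_lt_top K hK).ne)
  refine (hfin.image Subtype.val).subset ?_
  rintro x ⟨hxK, hx⟩
  exact ⟨⟨x, hxK⟩, hμ.one_le_measure_singleton hx, rfl⟩

end MeasurableSingleton

theorem exists_isOpen_superset_measure_eq [OpensMeasurableSpace X] [T2Space X]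
    [WeaklyLocallyCompactSpace X] (hμ : IsPointMeasure μ) {K : Set X} (hK : IsCompact K) :
    ∃ U, IsOpen U ∧ K ⊆ U ∧ μ U = μ K := by
  obtain ⟨L, hL, hKL⟩ := exists_compact_superset hK
  let S : Set X := {x ∈ L | μ {x} ≠ 0} \ K
  have hS : S.Finite := (hμ.finite_atoms hL).sdiff
  have hU : IsOpen (interior L \ S) := isOpen_interior.sdiff hS.isClosed
  have hKU : K ⊆ interior L \ S := fun x hx => ⟨hKL hx, fun hxS => hxS.2 hx⟩
  refine ⟨interior L \ S, hU, hKU, (measure_eq_measure_of_null_sdiff hKU ?_).symm⟩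
  refine hμ.measure_eq_zero_of_forall_singleton (hU.measurableSet.diff hK.measurableSet) ?_
  rintro x ⟨⟨hxL, hxS⟩, hxK⟩
  by_contra hx
  exact hxS ⟨⟨interior_subset hxL, hx⟩, hxK⟩

end IsPointMeasure

end PointMeasure

section Vague

variable {X ι : Type*} [MeasurableSpace X] [TopologicalSpace X] {l : Filter ι} {μ : Measure X}
  {μs : ι → Measure X}

/-- Vague convergence of `μs` to `μ` along the filter `l`: convergence of the integrals of all
continuous compactly supported functions. -/
def VagueTendsto (μs : ι → Measure X) (l : Filter ι) (μ : Measure X) : Prop :=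
  ∀ f : X → ℝ, Continuous f → HasCompactSupport f →
    Tendsto (fun i => ∫ x, f x ∂(μs i)) l (𝓝 (∫ x, f x ∂μ))

variable [OpensMeasurableSpace X] [T2Space X] [LocallyCompactSpace X]

theorem exists_continuous_measure_le_ofReal_integral_le {K U : Set X} (hK : IsCompact K)
    (hU : IsOpen U) (hKU : K ⊆ U) :
    ∃ f : X → ℝ, Continuous f ∧ HasCompactSupport f ∧
      ∀ ν : Measure X, IsFiniteMeasureOnCompacts ν →
        ν K ≤ ENNReal.ofReal (∫ x, f x ∂ν) ∧ ENNReal.ofReal (∫ x, f x ∂ν) ≤ ν U := by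
  obtain ⟨f, hf1, hf0, hfc, hf01⟩ := exists_continuous_one_zero_of_isCompact hK hU.isClosed_compl
    (Set.disjoint_compl_right_iff_subset.2 hKU)
  refine ⟨f, f.continuous, hfc, fun ν _ => ?_⟩
  rw [ofReal_integral_eq_lintegral_ofReal (f.continuous.integrable_of_hasCompactSupport hfc)
    (ae_of_all _ fun x => (hf01 x).1), ← lintegral_indicator_one hK.measurableSet,
    ← lintegral_indicator_one hU.measurableSet]
  constructor
  · refine lintegral_mono (Set.indicator_le fun x hx => ?_)
    simp [hf1 hx]
  · refine lintegral_mono fun x => Set.le_indicator_apply (fun _ => ?_) fun hx => ?_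
    · simpa using (hf01 x).2
    · simp [hf0 hx]

namespace VagueTendsto

theorem eventually_measure_lt [IsFiniteMeasureOnCompacts μ] [∀ i, IsFiniteMeasureOnCompacts (μs i)]
    (h : VagueTendsto μs l μ) {K U : Set X} (hK : IsCompact K) (hU : IsOpen U) (hKU : K ⊆ U)
    {c : ℝ≥0∞} (hc : μ U < c) : ∀ᶠ i in l, μs i K < c := by
  obtain ⟨f, hf, hfc, hfν⟩ := exists_continuous_measure_le_ofReal_integral_le hK hU hKU
  have hlim := (ENNReal.continuous_ofReal.tendsto _).comp (h f hf hfc)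
  filter_upwards [hlim.eventually_lt_const ((hfν μ inferInstance).2.trans_lt hc)] with i hi
  exact (hfν (μs i) inferInstance).1.trans_lt hi

theorem eventually_lt_measure [IsFiniteMeasureOnCompacts μ] [∀ i, IsFiniteMeasureOnCompacts (μs i)]
    (h : VagueTendsto μs l μ) {K U : Set X} (hK : IsCompact K) (hU : IsOpen U) (hKU : K ⊆ U)
    {c : ℝ≥0∞} (hc : c < μ K) : ∀ᶠ i in l, c < μs i U := by
  obtain ⟨f, hf, hfc, hfν⟩ := exists_continuous_measure_le_ofReal_integral_le hK hU hKU
  have hlim := (ENNReal.continuous_ofReal.tendsto _).comp (h f hf hfc)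
  filter_upwards [hlim.eventually_const_lt (hc.trans_le (hfν μ inferInstance).1)] with i hi
  exact hi.trans_le (hfν (μs i) inferInstance).2

theorem eventually_exists_atom (h : VagueTendsto μs l μ) (hμ : IsPointMeasure μ)
    (hμs : ∀ i, IsPointMeasure (μs i)) {a : X} (ha : μ {a} ≠ 0) {U : Set X} (hU : IsOpen U)
    (haU : a ∈ U) : ∀ᶠ i in l, ∃ x ∈ U, μs i {x} ≠ 0 := by
  have := hμ.isFiniteMeasureOnCompacts
  have := fun i => (hμs i).isFiniteMeasureOnCompacts
  filter_upwards [h.eventually_lt_measure isCompact_singleton hU (Set.singleton_subset_iff.2 haU)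
    (pos_iff_ne_zero.2 ha)] with i hi
  by_contra! h0
  exact hi.ne' ((hμs i).measure_eq_zero_of_forall_singleton hU.measurableSet h0)

theorem eventually_forall_mem_measure_singleton_eq_zero (h : VagueTendsto μs l μ)
    (hμ : IsPointMeasure μ) (hμs : ∀ i, IsPointMeasure (μs i)) {K : Set X} (hK : IsCompact K)
    (hK0 : μ K = 0) : ∀ᶠ i in l, ∀ x ∈ K, μs i {x} = 0 := by
  have := hμ.isFiniteMeasureOnCompacts
  have := fun i => (hμs i).isFiniteMeasureOnCompacts
  obtain ⟨U, hU, hKU, hUK⟩ := hμ.exists_isOpen_superset_measure_eq hK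
  have hU1 : μ U < 1 := by simp [hUK, hK0]
  filter_upwards [h.eventually_measure_lt hK hU hKU hU1] with i hi x hx
  exact (hμs i).measure_singleton_eq_zero_of_lt_one hi hx

theorem exists_tendsto_atom (h : VagueTendsto μs l μ) (hμ : IsPointMeasure μ)
    (hμs : ∀ i, IsPointMeasure (μs i)) {a : X} (ha : μ {a} = 1) :
    ∃ U, IsOpen U ∧ a ∈ U ∧ ∃ φ : ι → X, Tendsto φ l (𝓝 a) ∧
      ∀ᶠ i in l, μs i {φ i} = 1 ∧ ∀ x ∈ U, μs i {x} ≠ 0 → x = φ i := by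
  have := hμ.isFiniteMeasureOnCompacts
  have := fun i => (hμs i).isFiniteMeasureOnCompacts
  have : Nonempty X := ⟨a⟩
  have ha0 : μ {a} ≠ 0 := ha ▸ one_ne_zero
  obtain ⟨W, hW, haW, hWa⟩ := hμ.exists_isOpen_superset_measure_eq (isCompact_singleton (x := a))
  obtain ⟨L, hL, haL, hLW⟩ := exists_compact_subset hW (Set.singleton_subset_iff.1 haW)
  have hL2 : ∀ᶠ i in l, μs i L < 2 :=
    h.eventually_measure_lt hL hW hLW (hWa ▸ ha ▸ ENNReal.one_lt_two)
  let φ : ι → X := fun i => Classical.epsilon fun x => x ∈ L ∧ μs i {x} ≠ 0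
  have hφ : ∀ i x, x ∈ L → μs i {x} ≠ 0 → φ i ∈ L ∧ μs i {φ i} ≠ 0 := fun i x hx hx0 =>
    Classical.epsilon_spec (p := fun x => x ∈ L ∧ μs i {x} ≠ 0) ⟨x, hx, hx0⟩
  have hφ_unique : ∀ i, μs i L < 2 → ∀ x ∈ L, μs i {x} ≠ 0 → x = φ i := fun i hi x hx hx0 =>
    (hμs i).atom_unique_of_measure_lt_two hi hx (hφ i x hx hx0).1 hx0 (hφ i x hx hx0).2
  refine ⟨interior L, isOpen_interior, haL, φ, ?_, ?_⟩
  · refine tendsto_nhds.2 fun V hV haV => ?_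
    filter_upwards [hL2, h.eventually_exists_atom hμ hμs ha0 (hV.inter isOpen_interior)
      ⟨haV, haL⟩] with i hi ⟨x, hx, hx0⟩
    have hxφ : x = φ i := hφ_unique i hi x (interior_subset hx.2) hx0
    exact Set.mem_preimage.2 (hxφ ▸ hx.1)
  · filter_upwards [hL2, h.eventually_exists_atom hμ hμs ha0 isOpen_interior haL]
      with i hi ⟨x, hx, hx0⟩
    obtain ⟨hφL, hφ0⟩ := hφ i x (interior_subset hx) hx0
    have hφ2 : μs i {φ i} < 2 := (measure_mono (Set.singleton_subset_iff.2 hφL)).trans_lt hi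
    exact ⟨(hμs i).measure_singleton_eq_one hφ0 hφ2,
      fun y hy => hφ_unique i hi y (interior_subset hy)⟩

theorem exists_tendsto_atoms (h : VagueTendsto μs l μ) (hμ : IsPointMeasure μ)
    (hμs : ∀ i, IsPointMeasure (μs i)) {K : Set X} (hK : IsCompact K)
    (hsimple : ∀ x ∈ K, μ {x} ≤ 1) :
    ∃ φ : ι → {x ∈ K | μ {x} ≠ 0} → X, (∀ a, Tendsto (fun i => φ i a) l (𝓝 (a : X))) ∧
      ∀ᶠ i in l, Function.Injective (φ i) ∧ (∀ a, μs i {φ i a} = 1) ∧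
        ∀ x ∈ K, μs i {x} ≠ 0 → x ∈ Set.range (φ i) := by
  have : Finite {x ∈ K | μ {x} ≠ 0} := hμ.finite_atoms hK
  have hone : ∀ a : {x ∈ K | μ {x} ≠ 0}, μ {(a : X)} = 1 := fun a =>
    le_antisymm (hsimple a a.2.1) (hμ.one_le_measure_singleton a.2.2)
  choose U hU haU φ hφlim hφ using fun a => h.exists_tendsto_atom hμ hμs (hone a)
  have hC : IsCompact (K \ ⋃ a, U a) := hK.diff (isOpen_iUnion hU)
  have hC0 : μ (K \ ⋃ a, U a) = 0 := by
    refine hμ.measure_eq_zero_of_forall_singleton hC.measurableSet fun x hx => ?_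
    by_contra hx0
    exact hx.2 (Set.mem_iUnion.2 ⟨⟨x, hx.1, hx0⟩, haU _⟩)
  refine ⟨fun i a => φ a i, hφlim, ?_⟩
  filter_upwards [eventually_injective_of_tendsto Subtype.val_injective hφlim, eventually_all.2 hφ,
    h.eventually_forall_mem_measure_singleton_eq_zero hμ hμs hC hC0] with i hinj hi hCi
  refine ⟨hinj, fun a => (hi a).1, fun x hxK hx0 => ?_⟩
  have hxU : x ∈ ⋃ a, U a := by
    by_contra hxU
    exact hx0 (hCi x ⟨hxK, hxU⟩)
  obtain ⟨a, hxa⟩ := Set.mem_iUnion.1 hxU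
  exact ⟨a, ((hi a).2 x hxa hx0).symm⟩

end VagueTendsto

end Vague

section DistinctTupleSum

variable {X κ E : Type*} [Fintype κ] [AddCommMonoid E] [Module ℝ E] [TopologicalSpace E]

/-- The sum of `Φ` over the families of pairwise distinct points of `μ` indexed by `κ`, weighted by
the product of their masses. For `κ = Fin k` and `E = ℝ` this is `kPointStat`. -/
noncomputable def distinctTupleSum [MeasurableSpace X] (Φ : (κ → X) → E) (μ : Measure X) : E :=
  ∑' p : {p : κ → X // Function.Injective p}, (∏ i, μ.real {p.1 i}) • Φ p.1

theorem distinctTupleSum_eq_sum [MeasurableSpace X] {α : Type*}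
    [Fintype {q : κ → α // Function.Injective q}] {Φ : (κ → X) → E} {μ : Measure X} {φ : α → X}
    (hφ : Function.Injective φ) (hμ : ∀ a, μ {φ a} = 1)
    (hrange : ∀ p, Φ p ≠ 0 → ∀ i, μ {p i} ≠ 0 → p i ∈ Set.range φ) :
    distinctTupleSum Φ μ = ∑ q : {q : κ → α // Function.Injective q}, Φ (φ ∘ q.1) := by
  let g : {q : κ → α // Function.Injective q} → {p : κ → X // Function.Injective p} :=
    fun q => ⟨φ ∘ q.1, hφ.comp q.2⟩
  have hg : Function.Injective g := fun q r h =>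
    Subtype.ext (hφ.comp_left (congrArg Subtype.val h))
  rw [distinctTupleSum, ← hg.tsum_eq, tsum_fintype]
  · simp [g, measureReal_def, hμ]
  · rintro ⟨p, hp⟩ hne
    have hprod : ∏ i, μ.real {p i} ≠ 0 := left_ne_zero_of_smul hne
    have hatom : ∀ i, μ {p i} ≠ 0 := fun i h0 =>
      Finset.prod_ne_zero_iff.1 hprod i (mem_univ i) (by simp [measureReal_def, h0])
    choose q hq using fun i => hrange p (right_ne_zero_of_smul hne) i (hatom i)
    have hqp : φ ∘ q = p := funext hq
    exact ⟨⟨q, .of_comp (hqp ▸ hp)⟩, Subtype.ext hqp⟩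

theorem kPointStat_continuous_at_simple_config_general [MeasurableSpace X] [TopologicalSpace X]
    [OpensMeasurableSpace X] [T2Space X] [LocallyCompactSpace X] [ContinuousAdd E]
    {Λ : Measure X} (hΛ : IsPointMeasure Λ) (hsimple : ∀ x, Λ {x} ≤ 1)
    {Φ : (κ → X) → E} (hΦc : Continuous Φ) (hΦs : HasCompactSupport Φ)
    {ι : Type*} {l : Filter ι} {Λs : ι → Measure X} (hΛs : ∀ i, IsPointMeasure (Λs i))
    (hvague : VagueTendsto Λs l Λ) :
    Tendsto (fun i => distinctTupleSum Φ (Λs i)) l (𝓝 (distinctTupleSum Φ Λ)) := by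
  classical
  obtain ⟨K, hK, hΦK⟩ := exists_isCompact_forall_mem_of_hasCompactSupport hΦs
  obtain ⟨φ, hφlim, hφ⟩ := hvague.exists_tendsto_atoms hΛ hΛs hK fun x _ => hsimple x
  have : Fintype {x ∈ K | Λ {x} ≠ 0} := (hΛ.finite_atoms hK).fintype
  have hlimit : distinctTupleSum Φ Λ =
      ∑ q : {q : κ → {x ∈ K | Λ {x} ≠ 0} // Function.Injective q}, Φ (Subtype.val ∘ q.1) :=
    distinctTupleSum_eq_sum Subtype.val_injective
      (fun a => le_antisymm (hsimple a) (hΛ.one_le_measure_singleton a.2.2))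
      fun p hp i hi => ⟨⟨p i, hΦK p hp i, hi⟩, rfl⟩
  have hseq : ∀ᶠ i in l, distinctTupleSum Φ (Λs i) =
      ∑ q : {q : κ → {x ∈ K | Λ {x} ≠ 0} // Function.Injective q}, Φ (φ i ∘ q.1) :=
    hφ.mono fun i ⟨hinj, hone, hrange⟩ =>
      distinctTupleSum_eq_sum hinj hone fun p hp j => hrange (p j) (hΦK p hp j)
  rw [hlimit, tendsto_congr' hseq]
  exact tendsto_finsetSum _ fun q _ =>
    (hΦc.tendsto _).comp (tendsto_pi_nhds.2 fun j => hφlim (q.1 j))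

end DistinctTupleSum

/-- If `Λ` is a simple locally finite configuration, `k ≥ 1` and `Φ : ℂ^k → ℝ` is continuous
with compact support, then `T_Φ` is continuous at `Λ` for the vague topology: whenever
configurations `Λₙ → Λ` vaguely, `T_Φ(Λₙ) → T_Φ(Λ)`. -/
theorem kPointStat_continuous_at_simple_config
    (Λ : Measure ℂ) (hΛ : IsPointConfig Λ) (hsimple : ∀ z : ℂ, Λ {z} ≤ 1)
    (k : ℕ) (hk : 1 ≤ k)
    (Φ : (Fin k → ℂ) → ℝ) (hΦc : Continuous Φ) (hΦs : HasCompactSupport Φ)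
    (Λs : ℕ → Measure ℂ) (hΛs : ∀ n, IsPointConfig (Λs n))
    (hvague : ∀ f : ℂ → ℝ, Continuous f → HasCompactSupport f →
      Tendsto (fun n => ∫ z, f z ∂(Λs n)) atTop (nhds (∫ z, f z ∂Λ))) :
    Tendsto (fun n => kPointStat k Φ (Λs n)) atTop (nhds (kPointStat k Φ Λ)) :=
  kPointStat_continuous_at_simple_config_general ⟨hΛ.1, hΛ.2⟩ hsimple hΦc hΦs
    (fun n => ⟨(hΛs n).1, (hΛs n).2⟩) hvague
end
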